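/- arXiv:2310.00103 — 2 statements merged into one kernel-verified Lean document; each statement's English description precedes it below -/
import Mathlib

section
/- For all λ, μ ∈ ℤ^θ and all integers n ≥ 1, the extension group Ext^n computed in the abelian category C_k (which has enough projectives) satisfies Ext^n_{C_k}(Z(λ), Z(μ)^τ) = 0. -/
open scoped TensorProduct

/-- The data of a `ℤ^θ`-graded algebra over `k` with a triangular decomposition
`U⁻ ⊗ U⁰ ⊗ U⁺ ≃ U` satisfying the axioms of Andersen–Jantzen–Soergel, together with
the character-twist `μ ↦ μ̃` and the base algebra map `π : U⁰ → k`. -/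
structure AJSCtx (k : Type) [Field k] (θ : ℕ) where
  /-- the underlying algebra -/
  U : Type
  [ringU : Ring U]
  [algU : Algebra k U]
  /-- the `ℤ^θ`-grading of `U` -/
  grade : (Fin θ → ℤ) → Submodule k U
  internal : DirectSum.IsInternal grade
  one_mem : (1 : U) ∈ grade 0
  mul_mem : ∀ {ν μ : Fin θ → ℤ} {a b : U}, a ∈ grade ν → b ∈ grade μ → a * b ∈ grade (ν + μ)
  /-- the negative part `U⁻` -/
  Um : Subalgebra k U
  /-- the zero part `U⁰` -/
  U0 : Subalgebra k U
  /-- the positive part `U⁺` -/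
  Up : Subalgebra k U
  Um_graded : Subalgebra.toSubmodule Um = ⨆ ν, Subalgebra.toSubmodule Um ⊓ grade ν
  U0_graded : Subalgebra.toSubmodule U0 = ⨆ ν, Subalgebra.toSubmodule U0 ⊓ grade ν
  Up_graded : Subalgebra.toSubmodule Up = ⨆ ν, Subalgebra.toSubmodule Up ⊓ grade ν
  /-- multiplication induces a linear isomorphism `U⁻ ⊗ U⁰ ⊗ U⁺ → U` -/
  triangular :
    Function.Bijective
      (TensorProduct.lift
        ((LinearMap.mul k U).compl₁₂ Um.val.toLinearMap
          (TensorProduct.lift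
            ((LinearMap.mul k U).compl₁₂ U0.val.toLinearMap Up.val.toLinearMap))))
  U0_deg0 : Subalgebra.toSubmodule U0 ≤ grade 0
  Up_deg0 : Subalgebra.toSubmodule Up ⊓ grade 0 = Submodule.span k {1}
  Um_deg0 : Subalgebra.toSubmodule Um ⊓ grade 0 = Submodule.span k {1}
  Up_pos : ∀ ν : Fin θ → ℤ, Subalgebra.toSubmodule Up ⊓ grade ν ≠ ⊥ → 0 ≤ ν
  Um_neg : ∀ ν : Fin θ → ℤ, Subalgebra.toSubmodule Um ⊓ grade ν ≠ ⊥ → ν ≤ 0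
  finUp : FiniteDimensional k Up
  finUm : FiniteDimensional k Um
  commU0 : ∀ s t : U0, s * t = t * s
  /-- the group homomorphism `μ ↦ μ̃` into algebra automorphisms of `U⁰` -/
  tilde : (Fin θ → ℤ) → (U0 ≃ₐ[k] U0)
  tilde_zero : tilde 0 = AlgEquiv.refl
  tilde_add : ∀ μ ν : Fin θ → ℤ, tilde (μ + ν) = (tilde μ).trans (tilde ν)
  tilde_comm : ∀ (μ : Fin θ → ℤ), ∀ u ∈ grade μ, ∀ s : U0, (s : U) * u = u * ((tilde μ s : U))
  /-- the algebra map `π : U⁰ → k` -/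
  π : U0 →ₐ[k] k

attribute [instance] AJSCtx.ringU AJSCtx.algU

variable {k : Type} [Field k] {θ : ℕ}

/-- An object of the category `C_k`: a finite-dimensional `ℤ^θ`-graded `U`-module `M`
with `s·m = π(μ̃(s))·m` for `s ∈ U⁰` and `m ∈ M` homogeneous of degree `μ`. -/
structure CMod (C : AJSCtx k θ) where
  /-- the underlying space -/
  M : Type
  [acg : AddCommGroup M]
  [modk : Module k M]
  /-- the action of `U`, as a representation `U → End_k(M)` -/
  ρ : C.U →ₐ[k] Module.End k M
  /-- the `ℤ^θ`-grading of `M` -/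
  grM : (Fin θ → ℤ) → Submodule k M
  internal : DirectSum.IsInternal grM
  fin : FiniteDimensional k M
  act_graded : ∀ (ν μ : Fin θ → ℤ) (u : C.U) (m : M),
    u ∈ C.grade ν → m ∈ grM μ → ρ u m ∈ grM (ν + μ)
  act_U0 : ∀ (s : C.U0) (μ : Fin θ → ℤ) (m : M),
    m ∈ grM μ → ρ (s : C.U) m = C.π (C.tilde μ s) • m

attribute [instance] CMod.acg CMod.modk CMod.fin

variable {C : AJSCtx k θ}

/-- A submodule is graded if it is the sum of its homogeneous components. -/
def CMod.gradedSub (A : CMod C) (p : Submodule k A.M) : Prop :=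
  p = ⨆ ν, p ⊓ A.grM ν

/-- A submodule stable under the `U`-action. -/
def CMod.stable (A : CMod C) (p : Submodule k A.M) : Prop :=
  ∀ u : C.U, ∀ m ∈ p, A.ρ u m ∈ p

/-- Morphisms in `C_k`: `U`-equivariant degree-preserving `k`-linear maps. -/
def IsCHom (A B : CMod C) (f : A.M →ₗ[k] B.M) : Prop :=
  (∀ (u : C.U) (m : A.M), f (A.ρ u m) = B.ρ u (f m)) ∧
  (∀ ν : Fin θ → ℤ, ∀ m ∈ A.grM ν, f m ∈ B.grM ν)

/-- The space `Hom_{C_k}(A, B)` as a `k`-submodule of the linear maps. -/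
def homC (A B : CMod C) : Submodule k (A.M →ₗ[k] B.M) where
  carrier := {f | IsCHom A B f}
  add_mem' := by
    rintro f g ⟨hf1, hf2⟩ ⟨hg1, hg2⟩
    refine ⟨fun u m => ?_, fun ν m hm => Submodule.add_mem _ (hf2 ν m hm) (hg2 ν m hm)⟩
    simp [LinearMap.add_apply, hf1 u m, hg1 u m, map_add]
  zero_mem' := by
    refine ⟨fun u m => ?_, fun ν m hm => Submodule.zero_mem _⟩
    simp
  smul_mem' := by
    rintro c f ⟨hf1, hf2⟩
    refine ⟨fun u m => ?_, fun ν m hm => Submodule.smul_mem _ _ (hf2 ν m hm)⟩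
    simp [LinearMap.smul_apply, hf1 u m, map_smul]

/-- The linear map `U → M`, `u ↦ u·m`. -/
def actVec (A : CMod C) (m : A.M) : C.U →ₗ[k] A.M where
  toFun u := A.ρ u m
  map_add' a b := by simp [map_add]
  map_smul' c a := by simp [map_smul]

/-- `v` is a highest-weight vector of weight `μ`: it is homogeneous of degree `μ` and is
annihilated by every homogeneous element of `U⁺` of nonzero degree. -/
def IsHWvec (A : CMod C) (μ : Fin θ → ℤ) (v : A.M) : Prop :=
  v ∈ A.grM μ ∧
  ∀ ν : Fin θ → ℤ, ν ≠ 0 → ∀ u ∈ Subalgebra.toSubmodule C.Up ⊓ C.grade ν, A.ρ u v = 0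

/-- A simple object of `C_k`. -/
def CMod.IsSimpleObj (A : CMod C) : Prop :=
  (∃ m : A.M, m ≠ 0) ∧
  ∀ p : Submodule k A.M, A.gradedSub p → A.stable p → p = ⊥ ∨ p = ⊤

/-- `A` is (isomorphic to) the simple module `L(μ)`: it is simple and has a nonzero
highest-weight vector of weight `μ`. -/
def IsHWSimple (μ : Fin θ → ℤ) (A : CMod C) : Prop :=
  A.IsSimpleObj ∧ ∃ v : A.M, v ≠ 0 ∧ IsHWvec A μ v

/-- `Z` together with `m ∈ Z` is (a realization of) the Verma module `Z(μ)`: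
`m` is a highest-weight vector of weight `μ` and the action map `U⁻ → Z`, `a ↦ a·m`,
is a linear isomorphism. -/
def IsVerma (μ : Fin θ → ℤ) (Z : CMod C) (m : Z.M) : Prop :=
  IsHWvec Z μ m ∧ Function.Bijective ((actVec Z m).comp C.Um.val.toLinearMap)

/-- Isomorphism in `C_k`. -/
def CIso (A B : CMod C) : Prop :=
  ∃ f : A.M →ₗ[k] B.M, IsCHom A B f ∧ Function.Bijective f

/-- The subquotient `p/q` of `A` is isomorphic in `C_k` to `B`: there is a surjective
`U`-equivariant degree-preserving linear map `p → B` whose kernel is exactly `q`. -/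
def SubquotIso (A : CMod C) (p q : Submodule k A.M) (B : CMod C) : Prop :=
  ∃ f : ↥p →ₗ[k] B.M,
    Function.Surjective f ∧
    (∀ x : ↥p, f x = 0 ↔ (x : A.M) ∈ q) ∧
    (∀ (u : C.U) (x : ↥p) (h : A.ρ u (x : A.M) ∈ p), f ⟨A.ρ u (x : A.M), h⟩ = B.ρ u (f x)) ∧
    (∀ (ν : Fin θ → ℤ) (x : ↥p), (x : A.M) ∈ A.grM ν → f x ∈ B.grM ν)

/-- A composition series of `A` in `C_k` (by graded `U`-submodules with simple
subquotients). -/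
structure IsCompSeries (A : CMod C) (r : ℕ) (F : Fin (r + 1) → Submodule k A.M) : Prop where
  mono : Monotone F
  bot : F 0 = ⊥
  top : F (Fin.last r) = ⊤
  graded : ∀ i, A.gradedSub (F i)
  stable : ∀ i, A.stable (F i)
  simpleQuot : ∀ i : Fin r, ∃ S : CMod C,
    S.IsSimpleObj ∧ SubquotIso A (F i.succ) (F i.castSucc) S

/-- `[A : L] = n`: some (equivalently, by Jordan–Hölder, any) composition series of `A`
has exactly `n` factors isomorphic to `L`. -/
def HasMult (A L : CMod C) (n : ℕ) : Prop :=
  ∃ (r : ℕ) (F : Fin (r + 1) → Submodule k A.M), IsCompSeries A r F ∧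
    n = Nat.card {i : Fin r // SubquotIso A (F i.succ) (F i.castSucc) L}

/-- Projective object of `C_k`. -/
def CProjective (P : CMod C) : Prop :=
  ∀ (A B : CMod C) (g : A.M →ₗ[k] B.M), IsCHom A B g → Function.Surjective g →
    ∀ f : P.M →ₗ[k] B.M, IsCHom P B f →
      ∃ h : P.M →ₗ[k] A.M, IsCHom P A h ∧ g ∘ₗ h = f

/-- A simple (graded, `U`-stable) submodule. -/
def CMod.IsSimpleSub (A : CMod C) (p : Submodule k A.M) : Prop :=
  p ≠ ⊥ ∧ A.gradedSub p ∧ A.stable p ∧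
    ∀ q ≤ p, A.gradedSub q → A.stable q → q = ⊥ ∨ q = p

/-- The socle: the sum of all simple graded `U`-submodules. -/
def csocle (A : CMod C) : Submodule k A.M :=
  sSup {p : Submodule k A.M | A.IsSimpleSub p}

/-- The antiautomorphism `τ` of `U`. -/
structure TauData (C : AJSCtx k θ) where
  /-- the antiautomorphism, as a linear map -/
  τ : C.U →ₗ[k] C.U
  τ_one : τ 1 = 1
  τ_mul : ∀ a b : C.U, τ (a * b) = τ b * τ a
  τ_invol : ∀ a : C.U, τ (τ a) = a
  τ_fix : ∀ s : C.U0, τ (s : C.U) = (s : C.U)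
  τ_Up : Submodule.map τ (Subalgebra.toSubmodule C.Up) = Subalgebra.toSubmodule C.Um
  τ_deg : ∀ ν : Fin θ → ℤ, ∀ u ∈ C.grade ν, τ u ∈ C.grade (-ν)

/-- `B` is (a realization of) the `τ`-twisted dual `A^τ`: there is a perfect pairing
`B × A → k`, vanishing between distinct homogeneous components, with
`⟨u·b, a⟩ = ⟨b, τ(u)·a⟩`. -/
def IsTauDual (T : TauData C) (A B : CMod C) : Prop :=
  ∃ pr : B.M →ₗ[k] A.M →ₗ[k] k,
    Function.Bijective pr ∧
    (∀ (u : C.U) (b : B.M) (a : A.M), pr (B.ρ u b) a = pr b (A.ρ (T.τ u) a)) ∧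
    (∀ lam ν : Fin θ → ℤ, lam ≠ ν → ∀ b ∈ B.grM lam, ∀ a ∈ A.grM ν, pr b a = 0)

/-- The sum of all graded `U`-submodules `N` of `Z` with `N_μ = 0`. -/
def vermaRad (Z : CMod C) (μ : Fin θ → ℤ) : Submodule k Z.M :=
  sSup {N : Submodule k Z.M | Z.gradedSub N ∧ Z.stable N ∧ N ⊓ Z.grM μ = ⊥}

section GradedHelpers

variable {I V : Type} [AddCommGroup V] [Module k V]

/-- Existence of the component projections of an internal grading. -/
theorem exists_comp [DecidableEq I] {gr : I → Submodule k V}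
    (h : DirectSum.IsInternal gr) :
    ∃ c : I → V →ₗ[k] V, (∀ i x, x ∈ gr i → c i x = x) ∧
      (∀ i j x, i ≠ j → x ∈ gr j → c i x = 0) := by
  let e := LinearEquiv.ofBijective (DirectSum.coeLinearMap gr) h
  have he : ∀ j (x : gr j), e.symm (x : V) = DirectSum.lof k I (fun i => gr i) j x := by
    intro j x
    rw [LinearEquiv.symm_apply_eq]
    exact (DirectSum.coeLinearMap_lof gr _ _).symm
  refine ⟨fun i => (gr i).subtype ∘ₗ DirectSum.component k I (fun i => gr i) i ∘ₗ
    e.symm.toLinearMap, ?_, ?_⟩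
  · intro i x hx
    have := he i ⟨x, hx⟩
    simp only [LinearMap.comp_apply, LinearEquiv.coe_coe]
    simp only at this
    rw [this, DirectSum.component.lof_self]
    rfl
  · intro i j x hij hx
    have := he j ⟨x, hx⟩
    simp only [LinearMap.comp_apply, LinearEquiv.coe_coe]
    simp only at this
    rw [this, DirectSum.component.of, dif_neg (Ne.symm hij)]
    rfl

theorem internal_of_comp [DecidableEq I] {gr : I → Submodule k V} (htop : iSup gr = ⊤)
    (c : I → V →ₗ[k] V) (h1 : ∀ i x, x ∈ gr i → c i x = x)
    (h2 : ∀ i j x, i ≠ j → x ∈ gr j → c i x = 0) : DirectSum.IsInternal gr := by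
  rw [DirectSum.isInternal_submodule_iff_iSupIndep_and_iSup_eq_top]
  refine ⟨?_, htop⟩
  intro i
  rw [Submodule.disjoint_def]
  intro x hx hxs
  have : (⨆ j, ⨆ (_ : j ≠ i), gr j) ≤ LinearMap.ker (c i) := by
    refine iSup_le fun j => iSup_le fun hj y hy => ?_
    exact h2 i j y hj.symm hy
  rw [← h1 i x hx]
  exact this hxs

/-- Induction over homogeneous elements. -/
theorem hom_ind {gr : I → Submodule k V} (h : iSup gr = ⊤) (p : Submodule k V)
    (hp : ∀ i, ∀ x ∈ gr i, x ∈ p) (x : V) : x ∈ p := by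
  have : iSup gr ≤ p := iSup_le fun i => hp i
  exact this (h ▸ Submodule.mem_top)

/-- A family of linear endomorphisms, one for each degree, glue. -/
theorem exists_glue [DecidableEq I] {W : Type} [AddCommGroup W] [Module k W] {gr : I → Submodule k V}
    (h : DirectSum.IsInternal gr) (F : I → V →ₗ[k] W) :
    ∃ G : V →ₗ[k] W, ∀ i, ∀ x ∈ gr i, G x = F i x := by
  let e := LinearEquiv.ofBijective (DirectSum.coeLinearMap gr) h
  refine ⟨DirectSum.toModule k I W (fun i => F i ∘ₗ (gr i).subtype) ∘ₗ e.symm.toLinearMap, ?_⟩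
  intro i x hx
  have : e.symm x = DirectSum.lof k I (fun i => gr i) i ⟨x, hx⟩ := by
    rw [LinearEquiv.symm_apply_eq]
    exact (DirectSum.coeLinearMap_lof gr i ⟨x, hx⟩).symm
  simp [this]

end GradedHelpers

theorem AJSCtx.top (C : AJSCtx k θ) : iSup C.grade = ⊤ := C.internal.submodule_iSup_eq_top

theorem CMod.top (A : CMod C) : iSup A.grM = ⊤ := A.internal.submodule_iSup_eq_top

theorem Up_ind (C : AJSCtx k θ) (p : Submodule k C.U)
    (h : ∀ κ, ∀ b ∈ C.Up, b ∈ C.grade κ → b ∈ p) : ∀ b ∈ C.Up, b ∈ p := by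
  intro b hb
  have : Subalgebra.toSubmodule C.Up ≤ p := by
    rw [C.Up_graded]
    exact iSup_le fun κ x hx => h κ x hx.1 hx.2
  exact this hb

/-- Induction on `U` through the triangular decomposition. -/
theorem U_ind (C : AJSCtx k θ) (p : Submodule k C.U)
    (h : ∀ a ∈ C.Um, ∀ s : C.U0, ∀ κ, ∀ b ∈ C.Up, b ∈ C.grade κ → a * ((s : C.U) * b) ∈ p)
    (x : C.U) : x ∈ p := by
  obtain ⟨t, rfl⟩ := C.triangular.2 x
  induction t using TensorProduct.induction_on with
  | zero => simp
  | add x y hx hy => rw [map_add]; exact p.add_mem hx hy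
  | tmul a t =>
    induction t using TensorProduct.induction_on with
    | zero => simp
    | add x y hx hy => rw [TensorProduct.tmul_add, map_add]; exact p.add_mem hx hy
    | tmul s b =>
      simp only [TensorProduct.lift.tmul, LinearMap.compl₁₂_apply, LinearMap.mul_apply',
        AlgHom.toLinearMap_apply, Subalgebra.coe_val]
      exact Up_ind C (p.comap (LinearMap.mulLeft k (a : C.U) ∘ₗ LinearMap.mulLeft k (s : C.U)))
        (fun κ b hb hbd => by simpa using h a a.2 s κ b hb hbd) b b.2

/-- The character of `U⁰` attached to a weight. -/
def chi (C : AJSCtx k θ) (ν : Fin θ → ℤ) : C.U0 →ₐ[k] k := C.π.comp (C.tilde ν).toAlgHom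

theorem chi_tilde (C : AJSCtx k θ) (κ ν : Fin θ → ℤ) (s : C.U0) :
    chi C ν (C.tilde κ s) = chi C (κ + ν) s := by
  simp [chi, C.tilde_add]

/-- The left ideal generated by `s - χ_ν(s)`, `s ∈ U⁰`. -/
def Jid (C : AJSCtx k θ) (ν : Fin θ → ℤ) : Submodule C.U C.U :=
  Submodule.span C.U (Set.range fun s : C.U0 => (s : C.U) - algebraMap k C.U (chi C ν s))

theorem Jid_le (C : AJSCtx k θ) (ν : Fin θ → ℤ) (p : Submodule k C.U)
    (h : ∀ (x : C.U) (s : C.U0), x * s - chi C ν s • x ∈ p) : ∀ x ∈ Jid C ν, x ∈ p := by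
  intro x hx
  induction hx using Submodule.span_induction with
  | zero => exact p.zero_mem
  | add x y _ _ hx hy => exact p.add_mem hx hy
  | mem x hx =>
    obtain ⟨s, rfl⟩ := hx
    simpa [Algebra.algebraMap_eq_smul_one] using h 1 s
  | smul a x hx hx' =>
    clear hx'
    induction hx using Submodule.span_induction generalizing a with
    | zero => simp
    | add x y _ _ hx hy => rw [smul_add]; exact p.add_mem (hx a) (hy a)
    | smul b x _ hx => rw [smul_smul]; exact hx _
    | mem x hx =>
      obtain ⟨s, rfl⟩ := hx
      simpa [mul_sub, Algebra.algebraMap_eq_smul_one] using h a s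

theorem Jid_rel (C : AJSCtx k θ) (ν : Fin θ → ℤ) (x : C.U) (s : C.U0) :
    (Jid C ν).mkQ (x * s) = chi C ν s • (Jid C ν).mkQ x := by
  have : x * s - chi C ν s • x ∈ Jid C ν := by
    have h1 : (s : C.U) - algebraMap k C.U (chi C ν s) ∈ Jid C ν :=
      Submodule.subset_span ⟨s, rfl⟩
    have := (Jid C ν).smul_mem x h1
    simpa [mul_sub, Algebra.algebraMap_eq_smul_one] using this
  rw [← sub_eq_zero]
  have h2 := (Submodule.Quotient.mk_eq_zero (Jid C ν)).2 this
  rw [← h2]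
  rfl

/-- The quotient map, `k`-linearly. -/
def Jmk (C : AJSCtx k θ) (ν : Fin θ → ℤ) : C.U →ₗ[k] (C.U ⧸ Jid C ν) :=
  (Jid C ν).mkQ.restrictScalars k

theorem Jmk_surj (C : AJSCtx k θ) (ν : Fin θ → ℤ) : Function.Surjective (Jmk C ν) :=
  (Jid C ν).mkQ_surjective

theorem Jmk_rel (C : AJSCtx k θ) (ν : Fin θ → ℤ) (x : C.U) (s : C.U0) :
    Jmk C ν (x * s) = chi C ν s • Jmk C ν x := Jid_rel C ν x s

/-- Descend a linear map to `U/J`. -/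
theorem exists_Jdesc (C : AJSCtx k θ) (ν : Fin θ → ℤ) {W : Type} [AddCommGroup W] [Module k W]
    (f : C.U →ₗ[k] W) (h : ∀ (x : C.U) (s : C.U0), f (x * s) = chi C ν s • f x) :
    ∃ g : (C.U ⧸ Jid C ν) →ₗ[k] W, ∀ x, g (Jmk C ν x) = f x := by
  have hk : ((Jid C ν).restrictScalars k) ≤ LinearMap.ker f := by
    intro x hx
    refine Jid_le C ν (LinearMap.ker f) ?_ x hx
    intro x s
    simp [h]
  exact ⟨((Jid C ν).restrictScalars k).liftQ f hk, fun x => rfl⟩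

theorem exists_compJ (C : AJSCtx k θ) (ν : Fin θ → ℤ) :
    DirectSum.IsInternal
      (fun κ : Fin θ → ℤ => (C.grade (κ - ν)).map (Jmk C ν)) := by
  obtain ⟨c, h1, h2⟩ := exists_comp C.internal
  have key : ∀ κ, ∃ g : (C.U ⧸ Jid C ν) →ₗ[k] (C.U ⧸ Jid C ν),
      ∀ x, g (Jmk C ν x) = Jmk C ν (c (κ - ν) x) := by
    intro κ
    refine exists_Jdesc C ν (Jmk C ν ∘ₗ c (κ - ν)) ?_
    intro x s
    have := hom_ind C.top (LinearMap.ker ((Jmk C ν ∘ₗ c (κ - ν)) ∘ₗ LinearMap.mulRight k (s : C.U)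
      - chi C ν s • (Jmk C ν ∘ₗ c (κ - ν)))) ?_ x
    · simpa [sub_eq_zero] using this
    · intro η x hx
      have hxs : x * (s : C.U) ∈ C.grade η := by
        simpa using C.mul_mem hx (C.U0_deg0 s.2)
      by_cases hη : κ - ν = η
      · subst hη
        simp [h1 _ _ hx, h1 _ _ hxs, Jmk_rel]
      · simp [h2 _ _ _ hη hx, h2 _ _ _ hη hxs]
  choose g hg using key
  refine internal_of_comp ?_ g ?_ ?_
  · rw [eq_top_iff]
    rintro x -
    obtain ⟨x, rfl⟩ := Jmk_surj C ν x
    refine hom_ind C.top (Submodule.comap (Jmk C ν)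
      (⨆ κ, Submodule.map (Jmk C ν) (C.grade (κ - ν)))) ?_ x
    intro η x hx
    refine Submodule.mem_iSup_of_mem (η + ν) ?_
    exact ⟨x, by simpa using hx, rfl⟩
  · rintro κ _ ⟨x, hx, rfl⟩
    rw [hg, h1 _ _ hx]
  · rintro κ κ' _ hne ⟨x, hx, rfl⟩
    rw [hg, h2 _ _ _ (by simpa using hne) hx, map_zero]

/-- The multiplication map `U⁻ ⊗ U⁺ → U/J`. -/
noncomputable def Theta0 (C : AJSCtx k θ) (ν : Fin θ → ℤ) :
    C.Um ⊗[k] C.Up →ₗ[k] (C.U ⧸ Jid C ν) :=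
  Jmk C ν ∘ₗ TensorProduct.lift
    ((LinearMap.mul k C.U).compl₁₂ C.Um.val.toLinearMap C.Up.val.toLinearMap)

theorem Theta0_tmul (C : AJSCtx k θ) (ν : Fin θ → ℤ) (a : C.Um) (b : C.Up) :
    Theta0 C ν (a ⊗ₜ b) = Jmk C ν ((a : C.U) * b) := rfl

theorem Theta0_surj (C : AJSCtx k θ) (ν : Fin θ → ℤ) : Function.Surjective (Theta0 C ν) := by
  intro x
  obtain ⟨x, rfl⟩ := Jmk_surj C ν x
  refine U_ind C ((LinearMap.range (Theta0 C ν)).comap (Jmk C ν)) ?_ x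
  intro a ha s κ b hb hb'
  have : a * ((s : C.U) * b) = a * b * (C.tilde κ s : C.U) := by
    rw [C.tilde_comm κ b hb' s, mul_assoc]
  rw [Submodule.mem_comap, this, Jmk_rel]
  refine Submodule.smul_mem _ _ ⟨(⟨a, ha⟩ : C.Um) ⊗ₜ (⟨b, hb⟩ : C.Up), rfl⟩

theorem Theta0_inj (C : AJSCtx k θ) (ν : Fin θ → ℤ) : Function.Injective (Theta0 C ν) := by
  obtain ⟨G, hG⟩ := exists_glue C.internal (W := C.U0 →ₗ[k] C.U)
    (fun κ => LinearMap.smulRightₗ (chi C (κ + ν)).toLinearMap)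
  let e := LinearEquiv.ofBijective _ C.triangular
  let g : C.U0 ⊗[k] C.Up →ₗ[k] C.U :=
    TensorProduct.lift (G ∘ₗ C.Up.val.toLinearMap).flip
  let F : C.U →ₗ[k] C.Um ⊗[k] C.U := LinearMap.lTensor C.Um g ∘ₗ e.symm.toLinearMap
  have hF' : ∀ (a : C.Um) (s : C.U0) (b : C.Up),
      F ((a : C.U) * ((s : C.U) * b)) = a ⊗ₜ (G (b : C.U) s) := by
    intro a s b
    have : e.symm ((a : C.U) * ((s : C.U) * b)) = a ⊗ₜ (s ⊗ₜ b) := by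
      rw [LinearEquiv.symm_apply_eq]
      simp [e]
    simp [F, this, g]
  have hF : ∀ (a : C.Um) (s : C.U0) (κ : Fin θ → ℤ) (b : C.Up), (b : C.U) ∈ C.grade κ →
      F ((a : C.U) * ((s : C.U) * b)) = chi C (κ + ν) s • (a ⊗ₜ (b : C.U)) := by
    intro a s κ b hb
    rw [hF', hG κ _ hb]
    simp
  obtain ⟨F', hF1⟩ := exists_Jdesc C ν F (by
    intro x t
    have := U_ind C (LinearMap.ker (F ∘ₗ LinearMap.mulRight k (t : C.U) - chi C ν t • F)) ?_ x
    · simpa [sub_eq_zero] using this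
    · intro a ha s κ b hb hb'
      have h1 : b * (t : C.U) = ((C.tilde (-κ) t : C.U0) : C.U) * b := by
        rw [C.tilde_comm κ b hb', ← AlgEquiv.trans_apply, ← C.tilde_add]
        simp [C.tilde_zero]
      have h2 : a * ((s : C.U) * b) * (t : C.U)
          = a * (((s * C.tilde (-κ) t : C.U0) : C.U) * b) := by
        rw [mul_assoc, mul_assoc, h1]
        push_cast
        rw [mul_assoc]
      simp only [LinearMap.mem_ker, LinearMap.sub_apply, LinearMap.comp_apply,
        LinearMap.mulRight_apply, LinearMap.smul_apply]
      rw [h2, hF ⟨a, ha⟩ _ κ ⟨b, hb⟩ hb', hF ⟨a, ha⟩ _ κ ⟨b, hb⟩ hb', map_mul, chi_tilde]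
      simp [mul_comm, smul_smul])
  have hcomp : F' ∘ₗ Theta0 C ν = LinearMap.lTensor C.Um C.Up.val.toLinearMap := by
    refine TensorProduct.ext' fun a b => ?_
    rw [LinearMap.comp_apply, Theta0_tmul, hF1]
    have := Up_ind C (LinearMap.ker (F ∘ₗ LinearMap.mulLeft k (a : C.U)
      - TensorProduct.mk k C.Um C.U a)) ?_ b b.2
    · simpa [sub_eq_zero] using this
    · intro κ b hb hb'
      have := hF a 1 κ ⟨b, hb⟩ hb'
      simp only [OneMemClass.coe_one, one_mul, map_one, one_smul] at this
      simp [this]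
  have hinj : Function.Injective (LinearMap.lTensor C.Um C.Up.val.toLinearMap) :=
    Module.Flat.lTensor_preserves_injective_linearMap _ Subtype.val_injective
  rw [← hcomp] at hinj
  exact Function.Injective.of_comp (f := F') (by simpa using hinj)

theorem fin_UJ (C : AJSCtx k θ) (ν : Fin θ → ℤ) : FiniteDimensional k (C.U ⧸ Jid C ν) := by
  have := C.finUp
  have := C.finUm
  exact Module.Finite.of_surjective (Theta0 C ν) (Theta0_surj C ν)

/-- The object `U ⊗_{U⁰} k^ν` of `C_k`. -/
noncomputable def AUJ (C : AJSCtx k θ) (ν : Fin θ → ℤ) : CMod C where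
  M := C.U ⧸ Jid C ν
  ρ := Algebra.lsmul k k (C.U ⧸ Jid C ν)
  grM := fun κ : Fin θ → ℤ => (C.grade (κ - ν)).map (Jmk C ν)
  internal := exists_compJ C ν
  fin := fin_UJ C ν
  act_graded := by
    rintro η κ u _ hu ⟨x, hx, rfl⟩
    refine ⟨u * x, ?_, rfl⟩
    have := C.mul_mem hu hx
    rwa [← add_sub_assoc] at this
  act_U0 := by
    rintro s κ _ ⟨x, hx, rfl⟩
    have h1 : Algebra.lsmul k k (C.U ⧸ Jid C ν) (s : C.U) (Jmk C ν x)
      = Jmk C ν ((s : C.U) * x) := rfl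
    rw [h1, C.tilde_comm _ x hx, Jmk_rel, chi_tilde]
    simp [chi]

/-- Every object is a `U⁻`-module. -/
noncomputable instance CMod.umModule (A : CMod C) : Module C.Um A.M :=
  Module.compHom A.M (A.ρ.toRingHom.comp C.Um.val.toRingHom)

theorem CMod.um_smul (A : CMod C) (a : C.Um) (x : A.M) : a • x = A.ρ (a : C.U) x := rfl

instance CMod.umTower (A : CMod C) : IsScalarTower k C.Um A.M where
  smul_assoc c a x := by
    simp [CMod.um_smul]

/-- A morphism of `C_k` as a `U⁻`-linear map. -/
noncomputable def IsCHom.um {A B : CMod C} {f : A.M →ₗ[k] B.M} (h : IsCHom A B f) :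
    A.M →ₗ[C.Um] B.M where
  toFun := f
  map_add' := f.map_add
  map_smul' a x := h.1 a x

theorem Theta0_smul (C : AJSCtx k θ) (ν : Fin θ → ℤ) (a : C.Um) (x : C.Um ⊗[k] C.Up) :
    Theta0 C ν (a • x) = Algebra.lsmul k k (C.U ⧸ Jid C ν) (a : C.U) (Theta0 C ν x) := by
  induction x using TensorProduct.induction_on with
  | zero => simp
  | add x y hx hy =>
    rw [smul_add, map_add, hx, hy, map_add, map_add]
  | tmul b c =>
    rw [TensorProduct.smul_tmul', Theta0_tmul, Theta0_tmul]
    simp only [smul_eq_mul, MulMemClass.coe_mul, mul_assoc]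
    rfl

theorem AUJ_proj (C : AJSCtx k θ) (ν : Fin θ → ℤ) : Module.Projective C.Um (AUJ C ν).M := by
  let Θ : C.Um ⊗[k] C.Up →ₗ[C.Um] (AUJ C ν).M :=
    { toFun := Theta0 C ν
      map_add' := map_add _
      map_smul' := by
        intro a x
        exact Theta0_smul C ν a x }
  exact Module.Projective.of_equiv' (LinearEquiv.ofBijective Θ ⟨Theta0_inj C ν, Theta0_surj C ν⟩)

/-- Finite direct sums in `C_k`. -/
noncomputable def CMod.pi {ι : Type} [Fintype ι] (A : ι → CMod C) : CMod C where
  M := ∀ i, (A i).M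
  ρ := AlgHom.ofLinearMap
    { toFun := fun u => LinearMap.pi fun i => (A i).ρ u ∘ₗ LinearMap.proj i
      map_add' := by intro u v; ext; simp
      map_smul' := by intro u v; ext; simp }
    (by ext; simp) (by intro u v; ext; simp)
  grM := fun κ => Submodule.pi Set.univ fun i => (A i).grM κ
  internal := by
    classical
    choose c h1 h2 using fun i => exists_comp (A i).internal
    refine internal_of_comp ?_ (fun κ => LinearMap.pi fun i => c i κ ∘ₗ LinearMap.proj i) ?_ ?_
    · rw [eq_top_iff]
      rintro x -
      rw [← Finset.univ_sum_single x]
      refine Submodule.sum_mem _ fun i _ => ?_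
      refine hom_ind (A i).top (Submodule.comap (LinearMap.single k (fun i => (A i).M) i)
        (⨆ κ, Submodule.pi Set.univ fun i => (A i).grM κ)) ?_ (x i)
      intro κ y hy
      refine Submodule.mem_iSup_of_mem κ ?_
      intro j _
      by_cases hj : j = i
      · subst hj; simpa using hy
      · simp [hj]
    · intro κ x hx
      ext i
      exact h1 i κ _ (hx i trivial)
    · intro κ κ' x hne hx
      ext i
      exact h2 i κ κ' _ hne (hx i trivial)
  fin := inferInstance
  act_graded := by
    intro η κ u m hu hm i hi
    exact (A i).act_graded η κ u _ hu (hm i hi)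
  act_U0 := by
    intro s κ m hm
    ext i
    exact (A i).act_U0 s κ _ (hm i trivial)

theorem CMod.pi_proj {ι : Type} [Fintype ι] (A : ι → CMod C)
    (h : ∀ i, Module.Projective C.Um (A i).M) : Module.Projective C.Um (CMod.pi A).M := by
  classical
  have h1 : Module.Projective C.Um (Π₀ i, (A i).M) := inferInstance
  let e : (Π₀ i, (A i).M) ≃ₗ[C.Um] (∀ i, (A i).M) := DFinsupp.linearEquivFunOnFintype
  let equivPi : (∀ i, (A i).M) ≃ₗ[C.Um] (CMod.pi A).M :=
    { toFun := fun x => x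
      invFun := fun x => x
      map_add' := fun _ _ => rfl
      map_smul' := fun _ _ => rfl
      left_inv := fun _ => rfl
      right_inv := fun _ => rfl }
  exact Module.Projective.of_equiv' (e.trans equivPi)

/-- The map `U ⊗_{U⁰} k^ν → A` attached to a homogeneous element. -/
theorem exists_AUJ_map (A : CMod C) (ν : Fin θ → ℤ) (x : A.M) (hx : x ∈ A.grM ν) :
    ∃ f : (AUJ C ν).M →ₗ[k] A.M, IsCHom (AUJ C ν) A f ∧ x ∈ LinearMap.range f := by
  obtain ⟨f, hf⟩ := exists_Jdesc C ν (actVec A x) (by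
    intro u s
    simp only [actVec, LinearMap.coe_mk, AddHom.coe_mk, map_mul, Module.End.mul_apply]
    rw [A.act_U0 s ν x hx, map_smul]
    rfl)
  refine ⟨f, ⟨?_, ?_⟩, ⟨Jmk C ν 1, ?_⟩⟩
  · intro u m
    obtain ⟨m, rfl⟩ := Jmk_surj C ν m
    have h1 : (AUJ C ν).ρ u (Jmk C ν m) = Jmk C ν (u * m) := rfl
    rw [h1]
    erw [hf, hf]
    simp [actVec]
  · rintro κ _ ⟨m, hm, rfl⟩
    erw [hf]
    have := A.act_graded _ _ m x hm hx
    rw [sub_add_cancel] at this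
    exact this
  · erw [hf]
    simp [actVec]

/-- Projectives of `C_k` are projective over `U⁻`. -/
theorem CProjective.um_proj {P : CMod C} (hP : CProjective P) : Module.Projective C.Um P.M := by
  classical
  obtain ⟨b, hbS, hbspan, hbli⟩ := exists_linearIndependent k {x : P.M | ∃ ν, x ∈ P.grM ν}
  have hfin : b.Finite := hbli.setFinite
  have := hfin.fintype
  choose ν hν using fun i : b => hbS i.2
  choose f hf hfr using fun i : b => exists_AUJ_map P (ν i) i (hν i)
  let A : CMod C := CMod.pi fun i : b => AUJ C (ν i)
  let F : A.M →ₗ[k] P.M :=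
    { toFun := fun x => ∑ i, f i (x i)
      map_add' := fun x y => by
        rw [← Finset.sum_add_distrib]
        exact Finset.sum_congr rfl fun i _ => map_add (f i) (x i) (y i)
      map_smul' := fun c x => by
        rw [RingHom.id_apply, Finset.smul_sum]
        exact Finset.sum_congr rfl fun i _ => map_smul (f i) c (x i) }
  have hFa : ∀ x : A.M, F x = ∑ i, f i (x i) := fun x => rfl
  have hF : IsCHom A P F := by
    constructor
    · intro u m
      rw [hFa, hFa, map_sum]
      exact Finset.sum_congr rfl fun i _ => (hf i).1 u (m i)
    · intro κ m hm
      rw [hFa]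
      exact Submodule.sum_mem _ fun i _ => (hf i).2 κ _ (hm i trivial)
  have hFs : Function.Surjective F := by
    rw [← LinearMap.range_eq_top, eq_top_iff]
    have h1 : Submodule.span k b = ⊤ := by
      rw [hbspan, eq_top_iff]
      intro x _
      exact hom_ind P.top (Submodule.span k {x : P.M | ∃ ν, x ∈ P.grM ν}) (fun i y hy => Submodule.subset_span ⟨i, hy⟩) x
    rw [← h1, Submodule.span_le]
    intro x hx
    obtain ⟨y, hy⟩ := hfr ⟨x, hx⟩
    refine ⟨(Pi.single ⟨x, hx⟩ y : ∀ i : b, (AUJ C (ν i)).M), ?_⟩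
    refine (hFa _).trans ?_
    rw [Finset.sum_eq_single ⟨x, hx⟩]
    · simpa using hy
    · intro j _ hj
      rw [Pi.single_eq_of_ne hj, map_zero]
    · simp
  obtain ⟨s, hs, hsF⟩ := hP A P F hF hFs LinearMap.id ⟨fun _ _ => rfl, fun _ _ h => h⟩
  have : Module.Projective C.Um A.M := CMod.pi_proj _ fun i => AUJ_proj C (ν i)
  refine Module.Projective.of_split hs.um hF.um ?_
  ext x
  exact LinearMap.congr_fun hsF x

theorem Verma_proj {lam : Fin θ → ℤ} {Z : CMod C} {m : Z.M} (h : IsVerma lam Z m) :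
    Module.Projective C.Um Z.M := by
  let Ψ : C.Um →ₗ[C.Um] Z.M := LinearMap.toSpanSingleton C.Um Z.M m
  exact Module.Projective.of_equiv' (LinearEquiv.ofBijective Ψ h.2)

/-- Frobenius reciprocity: functionals on `A` of weight `μ` killed by the augmentation ideal
of `U⁻` give morphisms to `Z(μ)^τ`. -/
theorem exists_frob (T : TauData C) {μ : Fin θ → ℤ} {Z B : CMod C} {z : Z.M}
    (hZ : IsVerma μ Z z) (pr : B.M →ₗ[k] Z.M →ₗ[k] k) (hpr : Function.Bijective pr)
    (hpr1 : ∀ (u : C.U) (b : B.M) (a : Z.M), pr (B.ρ u b) a = pr b (Z.ρ (T.τ u) a))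
    (hpr2 : ∀ lam ν : Fin θ → ℤ, lam ≠ ν → ∀ b ∈ B.grM lam, ∀ a ∈ Z.grM ν, pr b a = 0)
    (A : CMod C) (φ : A.M →ₗ[k] k) (hφ1 : ∀ κ, κ ≠ μ → ∀ x ∈ A.grM κ, φ x = 0)
    (hφ2 : ∀ κ, κ ≠ 0 → ∀ u ∈ C.Um, u ∈ C.grade κ → ∀ x, φ (A.ρ u x) = 0) :
    ∃ g : A.M →ₗ[k] B.M, IsCHom A B g ∧
      ∀ (w : C.U) (x : A.M), pr (g x) (Z.ρ w z) = φ (A.ρ (T.τ w) x) := by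
  let Ψ := LinearEquiv.ofBijective _ hZ.2
  let E := LinearEquiv.ofBijective pr hpr
  let H : A.M →ₗ[k] Z.M →ₗ[k] k :=
    LinearMap.mk₂ k (fun x y => φ (A.ρ (T.τ (Ψ.symm y : C.U)) x))
      (by intros; simp) (by intros; simp) (by intros; simp) (by intros; simp)
  let g : A.M →ₗ[k] B.M := E.symm.toLinearMap ∘ₗ H
  have hg0 : ∀ x, pr (g x) = H x := fun x => E.apply_symm_apply (H x)
  have hΨ : ∀ a : C.Um, Ψ.symm (Z.ρ (a : C.U) z) = a := by
    intro a
    rw [LinearEquiv.symm_apply_eq]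
    rfl
  have hg1 : ∀ (a : C.Um) (x : A.M), pr (g x) (Z.ρ (a : C.U) z) = φ (A.ρ (T.τ a) x) := by
    intro a x
    rw [hg0]
    simp [H, hΨ]
  have hφs : ∀ (s : C.U0) (x : A.M), φ (A.ρ (s : C.U) x) = chi C μ s * φ x := by
    intro s x
    have := hom_ind A.top (LinearMap.ker (φ ∘ₗ A.ρ (s : C.U) - chi C μ s • φ)) ?_ x
    · simpa [sub_eq_zero] using this
    · intro κ y hy
      by_cases hκ : κ = μ
      · subst hκ
        simp [A.act_U0 s κ y hy, chi]
      · simp [A.act_U0 s κ y hy, hφ1 κ hκ y hy]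
  have hg : ∀ (w : C.U) (x : A.M), pr (g x) (Z.ρ w z) = φ (A.ρ (T.τ w) x) := by
    intro w x
    let L1 : C.U →ₗ[k] k := pr (g x) ∘ₗ actVec Z z
    let L2 : C.U →ₗ[k] k := φ ∘ₗ actVec A x ∘ₗ T.τ
    have := U_ind C (LinearMap.ker (L1 - L2)) ?_ w
    · rw [LinearMap.mem_ker, LinearMap.sub_apply, sub_eq_zero] at this
      exact this
    · intro a ha s κ b hb hb'
      rw [LinearMap.mem_ker, LinearMap.sub_apply, sub_eq_zero]
      change pr (g x) (Z.ρ (a * ((s : C.U) * b)) z) = φ (A.ρ (T.τ (a * ((s : C.U) * b))) x)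
      simp only [T.τ_mul, map_mul, Module.End.mul_apply, T.τ_fix]
      by_cases hκ : κ = 0
      · subst hκ
        have hb1 : b ∈ Submodule.span k {(1 : C.U)} := by
          rw [← C.Up_deg0]; exact ⟨hb, hb'⟩
        obtain ⟨c, rfl⟩ := Submodule.mem_span_singleton.1 hb1
        simp only [map_smul, map_one, T.τ_one, LinearMap.smul_apply, Module.End.one_apply]
        rw [Z.act_U0 s μ z hZ.1.1, hφs]
        simp only [map_smul]
        rw [hg1 ⟨a, ha⟩ x]
        simp [chi]
      · rw [hZ.1.2 κ hκ b ⟨hb, hb'⟩, hφ2 (-κ) (by simpa using hκ)]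
        · simp
        · have : T.τ b ∈ Subalgebra.toSubmodule C.Um := by
            rw [← T.τ_Up]; exact ⟨b, hb, rfl⟩
          exact this
        · exact T.τ_deg κ b hb'
  have hgen : ∀ y : Z.M, ∃ w : C.U, Z.ρ w z = y := by
    intro y
    obtain ⟨a, ha⟩ := hZ.2.2 y
    exact ⟨a, ha⟩
  refine ⟨g, ⟨?_, ?_⟩, hg⟩
  · intro u x
    apply hpr.1
    ext y
    obtain ⟨w, rfl⟩ := hgen y
    rw [hpr1, ← Module.End.mul_apply, ← map_mul, hg, hg, T.τ_mul, T.τ_invol, map_mul]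
    rfl
  · intro κ x hx
    have hvan : ∀ κ', κ' ≠ κ → ∀ y ∈ Z.grM κ', pr (g x) y = 0 := by
      obtain ⟨c, hc1, hc2⟩ := exists_comp Z.internal
      have : ∀ y, pr (g x) y = pr (g x) (c κ y) := by
        intro y
        obtain ⟨w, rfl⟩ := hgen y
        have := hom_ind C.top (LinearMap.ker ((pr (g x) - pr (g x) ∘ₗ c κ) ∘ₗ actVec Z z)) ?_ w
        · rw [LinearMap.mem_ker, LinearMap.comp_apply, LinearMap.sub_apply, sub_eq_zero] at this
          exact this
        · intro η w hw
          rw [LinearMap.mem_ker, LinearMap.comp_apply, LinearMap.sub_apply, sub_eq_zero]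
          change pr (g x) (Z.ρ w z) = pr (g x) (c κ (Z.ρ w z))
          have hwz := Z.act_graded η μ w z hw hZ.1.1
          by_cases h : κ = η + μ
          · rw [hc1 κ _ (h ▸ hwz)]
          · rw [hc2 κ _ _ h hwz, map_zero, hg]
            refine hφ1 (-η + κ) ?_ _ (A.act_graded _ _ _ _ (T.τ_deg η w hw) hx)
            rintro rfl
            exact h (by abel)
      intro κ' hne y hy
      rw [this y, hc2 κ κ' y hne.symm hy, map_zero]
    obtain ⟨c, hc1, hc2⟩ := exists_comp B.internal
    -- components pair as expected
    have hcomp : ∀ η, ∀ y ∈ Z.grM η, ∀ b : B.M, pr b y = pr (c η b) y := by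
      intro η y hy b
      have := hom_ind B.top (LinearMap.ker ((LinearMap.id - c η).dualMap (pr.flip y))) ?_ b
      · simpa [sub_eq_zero] using this
      · intro κ' b hb
        by_cases h : η = κ'
        · subst h; simp [hc1 _ _ hb]
        · simp [hc2 _ _ _ h hb, hpr2 κ' η (Ne.symm h) b hb y hy]
    have hmem : ∀ b, c κ b ∈ B.grM κ := by
      intro b
      refine hom_ind B.top ((B.grM κ).comap (c κ)) ?_ b
      intro κ' b hb
      by_cases h : κ = κ'
      · subst h; simpa [hc1 _ _ hb] using hb
      · simp [hc2 _ _ _ h hb]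
    have : g x = c κ (g x) := by
      apply hpr.1
      ext y
      have := hom_ind Z.top (LinearMap.ker (pr (g x) - pr (c κ (g x)))) ?_ y
      · simpa [sub_eq_zero] using this
      · intro η y hy
        rw [LinearMap.mem_ker, LinearMap.sub_apply, sub_eq_zero]
        by_cases h : η = κ
        · subst h; exact hcomp η y hy _
        · rw [hvan η h y hy, hpr2 κ η (Ne.symm h) _ (hmem _) y hy]
    rw [this]
    exact hmem _

/-- If `E → Q` is a surjection onto a `U⁻`-projective module, its kernel splits off over `U⁻`. -/
theorem exists_retr {R E Q : Type} [Ring R] [AddCommGroup E] [AddCommGroup Q] [Module R E]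
    [Module R Q] [Module.Projective R Q] (f : E →ₗ[R] Q) (hf : Function.Surjective f) :
    ∃ c : E →ₗ[R] E, (∀ x, f (c x) = 0) ∧ ∀ x, f x = 0 → c x = x := by
  obtain ⟨s, hs⟩ := Module.projective_lifting_property f LinearMap.id hf
  refine ⟨LinearMap.id - s ∘ₗ f, ?_, ?_⟩
  · intro x
    have := LinearMap.congr_fun hs (f x)
    simp at this
    simp [this]
  · intro x hx
    simp [hx]

/-- **Vanishing of higher Ext.** For all `λ, μ ∈ ℤ^θ` and `n ≥ 1`,
`Ext^n_{C_k}(Z(λ), Z(μ)^τ) = 0`. This is expressed via projective resolutions: for any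
projective resolution `⋯ → P 1 → P 0 → Z(λ) → 0` in `C_k` and any `n = m + 1 ≥ 1`, every
cocycle `f : P (m+1) → Z(μ)^τ` (i.e. `f ∘ d (m+1) = 0`) is a coboundary
(`f = g ∘ d m` for some `g : P m → Z(μ)^τ`). -/
theorem ext_vanishing {k : Type} [Field k] [IsAlgClosed k] [CharZero k]
    {θ : ℕ} (hθ : 1 ≤ θ) (C : AJSCtx k θ) (T : TauData C)
    (lam μ : Fin θ → ℤ)
    (Zlam : CMod C) (mlam : Zlam.M) (hZlam : IsVerma lam Zlam mlam)
    (Zmu : CMod C) (mmu : Zmu.M) (hZmu : IsVerma μ Zmu mmu)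
    (B : CMod C) (hB : IsTauDual T Zmu B)
    (P : ℕ → CMod C) (hP : ∀ n, CProjective (P n))
    (d : ∀ n : ℕ, (P (n + 1)).M →ₗ[k] (P n).M) (hd : ∀ n, IsCHom (P (n + 1)) (P n) (d n))
    (ε : (P 0).M →ₗ[k] Zlam.M) (hε : IsCHom (P 0) Zlam ε) (hεs : Function.Surjective ε)
    (hex0 : LinearMap.ker ε = LinearMap.range (d 0))
    (hex : ∀ n, LinearMap.ker (d n) = LinearMap.range (d (n + 1))) :
    ∀ (m : ℕ) (f : (P (m + 1)).M →ₗ[k] B.M), IsCHom (P (m + 1)) B f →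
      f ∘ₗ d (m + 1) = 0 →
      ∃ g : (P m).M →ₗ[k] B.M, IsCHom (P m) B g ∧ f = g ∘ₗ d m := by
  have hPproj : ∀ n, Module.Projective C.Um (P n).M := fun n => (hP n).um_proj
  have hretr : ∀ m, ∃ c : (P m).M →ₗ[C.Um] (P m).M,
      (∀ x, ∃ y, d m y = c x) ∧ ∀ y, c (d m y) = d m y := by
    intro m
    induction m with
    | zero =>
      have := Verma_proj hZlam
      obtain ⟨c, h1, h2⟩ := exists_retr hε.um hεs
      refine ⟨c, fun x => ?_, fun y => ?_⟩
      · have : c x ∈ LinearMap.ker ε := h1 x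
        rw [hex0] at this
        exact this
      · apply h2
        have : d 0 y ∈ LinearMap.ker ε := by rw [hex0]; exact ⟨y, rfl⟩
        exact this
    | succ m ih =>
      obtain ⟨c, h1, h2⟩ := ih
      let R : Submodule C.Um (P m).M := LinearMap.range (hd m).um
      have hRp : Module.Projective C.Um R := by
        have := hPproj m
        refine Module.Projective.of_split R.subtype (c.codRestrict R fun x => h1 x) ?_
        ext ⟨_, y, rfl⟩
        exact h2 y
      obtain ⟨c', h1', h2'⟩ := exists_retr (hd m).um.rangeRestrict
        (hd m).um.surjective_rangeRestrict
      refine ⟨c', fun x => ?_, fun y => ?_⟩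
      · have : c' x ∈ LinearMap.ker (d m) := congrArg Subtype.val (h1' x)
        rw [hex] at this
        exact this
      · apply h2'
        have : d (m + 1) y ∈ LinearMap.ker (d m) := by rw [hex]; exact ⟨y, rfl⟩
        exact Subtype.ext this
  intro m f hf hfd
  obtain ⟨pr, hpr, hpr1, hpr2⟩ := hB
  obtain ⟨c, hc1, hc2⟩ := hretr m
  obtain ⟨t, ht⟩ := (d m).rangeRestrict.exists_rightInverse_of_surjective
    (LinearMap.range_eq_top.2 (d m).surjective_rangeRestrict)
  have hker : ∀ y, d m y = 0 → f y = 0 := by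
    intro y hy
    have : y ∈ LinearMap.ker (d m) := hy
    rw [hex] at this
    obtain ⟨w, rfl⟩ := this
    exact LinearMap.congr_fun hfd w
  -- the functional on `P m`
  let cr : (P m).M →ₗ[k] LinearMap.range (d m) :=
    (c.restrictScalars k).codRestrict (LinearMap.range (d m)) fun x => hc1 x
  let φ0 : (P m).M →ₗ[k] k := pr.flip mmu ∘ₗ f ∘ₗ t ∘ₗ cr
  have hφ0 : ∀ x y, c x = d m y → φ0 x = pr (f y) mmu := by
    intro x y hxy
    have h1 : d m (t (cr x)) = d m y := by
      have := congrArg Subtype.val (LinearMap.congr_fun ht (cr x))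
      rw [← hxy]
      exact this
    have h2 : f (t (cr x)) = f y := by
      rw [← sub_eq_zero, ← map_sub]
      apply hker
      rw [map_sub, h1, sub_self]
    simp [φ0, h2]
  obtain ⟨q, hq1, hq2⟩ := exists_comp (P m).internal
  let φ : (P m).M →ₗ[k] k := φ0 ∘ₗ q μ
  have hφ0u : ∀ κ, κ ≠ 0 → ∀ u ∈ C.Um, u ∈ C.grade κ → ∀ x, φ0 ((P m).ρ u x) = 0 := by
    intro κ hκ u hu huκ x
    obtain ⟨y, hy⟩ := hc1 x
    have h1 : c ((P m).ρ u x) = d m ((P (m + 1)).ρ u y) := by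
      rw [(hd m).1, hy]
      exact c.map_smul (⟨u, hu⟩ : C.Um) x
    rw [hφ0 _ _ h1, hf.1, hpr1]
    have hu' : u ∈ Submodule.map T.τ (Subalgebra.toSubmodule C.Up) := by
      rw [T.τ_Up]; exact hu
    obtain ⟨v, hv, rfl⟩ := hu'
    have hdeg := T.τ_deg _ _ huκ
    rw [T.τ_invol] at hdeg ⊢
    rw [hZmu.1.2 (-κ) (by simpa using hκ) v ⟨hv, hdeg⟩, map_zero]
  have hφ1 : ∀ κ, κ ≠ μ → ∀ x ∈ (P m).grM κ, φ x = 0 := by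
    intro κ hκ x hx
    simp [φ, hq2 μ κ x hκ.symm hx]
  have hφ2 : ∀ κ, κ ≠ 0 → ∀ u ∈ C.Um, u ∈ C.grade κ → ∀ x, φ ((P m).ρ u x) = 0 := by
    intro κ hκ u hu huκ x
    refine hom_ind (P m).top (LinearMap.ker (φ ∘ₗ (P m).ρ u)) ?_ x
    intro η x hx
    have hux := (P m).act_graded κ η u x huκ hx
    rw [LinearMap.mem_ker, LinearMap.comp_apply]
    by_cases h : κ + η = μ
    · simp only [φ, LinearMap.comp_apply]
      rw [hq1 μ _ (h ▸ hux)]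
      exact hφ0u κ hκ u hu huκ x
    · exact hφ1 _ h _ hux
  have hφd : ∀ y, φ (d m y) = pr (f y) mmu := by
    intro y
    have := hom_ind (P (m + 1)).top (LinearMap.ker (φ ∘ₗ d m - pr.flip mmu ∘ₗ f)) ?_ y
    · simpa [sub_eq_zero] using this
    · intro κ y hy
      rw [LinearMap.mem_ker, LinearMap.sub_apply, sub_eq_zero]
      change φ (d m y) = pr (f y) mmu
      have hdy := (hd m).2 κ y hy
      by_cases h : κ = μ
      · subst h
        simp only [φ, LinearMap.comp_apply]
        rw [hq1 κ _ hdy]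
        exact hφ0 _ _ (hc2 y)
      · rw [hφ1 κ h _ hdy, hpr2 κ μ h _ (hf.2 κ y hy) _ hZmu.1.1]
  obtain ⟨g, hg, hgw⟩ := exists_frob T hZmu pr hpr hpr1 hpr2 (P m) φ hφ1 hφ2
  refine ⟨g, hg, ?_⟩
  ext y
  apply hpr.1
  ext w
  obtain ⟨a, rfl⟩ := hZmu.2.2 w
  change pr (f y) (Zmu.ρ (a : C.U) mmu) = pr (g (d m y)) (Zmu.ρ (a : C.U) mmu)
  rw [hgw, ← (hd m).1, hφd, hf.1, hpr1, T.τ_invol]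
end

section
/- Every projective object P of C_k admits a Z-filtration: there is a chain of graded U-submodules 0 = P_0 ⊂ P_1 ⊂ ⋯ ⊂ P_r = P such that each successive quotient P_i/P_{i−1} is isomorphic in C_k to a Verma module Z(μ_i) for some μ_i ∈ ℤ^θ. -/
open scoped TensorProduct

variable {k : Type} [Field k] {θ : ℕ}

variable {C : AJSCtx k θ}

section helpers

/-- The homogeneous monomials of degree `ν`. -/
def triSet (C : AJSCtx k θ) (ν : Fin θ → ℤ) : Set C.U :=
  {u | ∃ (ν₁ ν₂ : Fin θ → ℤ) (a s b : C.U), a ∈ C.Um ∧ a ∈ C.grade ν₁ ∧ s ∈ C.U0 ∧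
    b ∈ C.Up ∧ b ∈ C.grade ν₂ ∧ ν₁ + ν₂ = ν ∧ u = a * (s * b)}

theorem triSet_le (C : AJSCtx k θ) (ν : Fin θ → ℤ) :
    Submodule.span k (triSet C ν) ≤ C.grade ν := by
  rw [Submodule.span_le]
  rintro u ⟨ν₁, ν₂, a, s, b, -, ha, hs, -, hb, rfl, rfl⟩
  have h0 := C.U0_deg0 hs
  have := C.mul_mem ha (C.mul_mem h0 hb)
  rwa [zero_add] at this

theorem Um_induct (C : AJSCtx k θ) {p : C.U → Prop}
    (h : ∀ ν, ∀ a ∈ C.Um, a ∈ C.grade ν → p a) (h0 : p 0)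
    (hadd : ∀ a b, p a → p b → p (a + b)) : ∀ a ∈ C.Um, p a := by
  intro a ha
  have ha' : a ∈ Subalgebra.toSubmodule C.Um := ha
  rw [C.Um_graded] at ha'
  exact Submodule.iSup_induction _ (motive := p) ha' (fun ν x hx => h ν x hx.1 hx.2) h0 hadd

theorem Up_induct (C : AJSCtx k θ) {p : C.U → Prop}
    (h : ∀ ν, ∀ a ∈ C.Up, a ∈ C.grade ν → p a) (h0 : p 0)
    (hadd : ∀ a b, p a → p b → p (a + b)) : ∀ a ∈ C.Up, p a := by
  intro a ha
  have ha' : a ∈ Subalgebra.toSubmodule C.Up := ha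
  rw [C.Up_graded] at ha'
  exact Submodule.iSup_induction _ (motive := p) ha' (fun ν x hx => h ν x hx.1 hx.2) h0 hadd

theorem U_induct (C : AJSCtx k θ) {p : C.U → Prop}
    (h : ∀ ν, ∀ a ∈ C.grade ν, p a) (h0 : p 0)
    (hadd : ∀ a b, p a → p b → p (a + b)) : ∀ a, p a := by
  intro a
  have ha' : a ∈ (⨆ ν, C.grade ν) := by
    rw [C.internal.submodule_iSup_eq_top]; trivial
  exact Submodule.iSup_induction _ (motive := p) ha' (fun ν x hx => h ν x hx) h0 hadd

theorem M_induct (A : CMod C) {p : A.M → Prop}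
    (h : ∀ ν, ∀ a ∈ A.grM ν, p a) (h0 : p 0)
    (hadd : ∀ a b, p a → p b → p (a + b)) : ∀ a, p a := by
  intro a
  have ha' : a ∈ (⨆ ν, A.grM ν) := by
    rw [A.internal.submodule_iSup_eq_top]; trivial
  exact Submodule.iSup_induction _ (motive := p) ha' (fun ν x hx => h ν x hx) h0 hadd

theorem mono_mem (C : AJSCtx k θ) (a s b : C.U) (ha : a ∈ C.Um) (hs : s ∈ C.U0)
    (hb : b ∈ C.Up) : a * (s * b) ∈ ⨆ ν, Submodule.span k (triSet C ν) := by
  revert b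
  refine Up_induct C (fun ν₂ b hb hb2 => ?_) (by simp) (fun x y hx hy => ?_)
  · revert a
    refine Um_induct C (fun ν₁ a ha ha2 => ?_) (by simp) (fun x y hx hy => ?_)
    · exact Submodule.mem_iSup_of_mem (ν₁ + ν₂) (Submodule.subset_span
        ⟨ν₁, ν₂, a, s, b, ha, ha2, hs, hb, hb2, rfl, rfl⟩)
    · rw [add_mul]; exact Submodule.add_mem _ hx hy
  · rw [mul_add, mul_add]; exact Submodule.add_mem _ hx hy

theorem tri_top (C : AJSCtx k θ) : (⨆ ν, Submodule.span k (triSet C ν)) = ⊤ := by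
  rw [eq_top_iff]
  rintro u -
  obtain ⟨t, rfl⟩ := C.triangular.2 u
  induction t using TensorProduct.induction_on with
  | zero => simp
  | add x y hx hy => rw [map_add]; exact Submodule.add_mem _ hx hy
  | tmul a x =>
    induction x using TensorProduct.induction_on with
    | zero => simp
    | add x y hx hy => rw [TensorProduct.tmul_add, map_add]; exact Submodule.add_mem _ hx hy
    | tmul s b => exact mono_mem C a s b a.2 s.2 b.2

theorem tri_span (C : AJSCtx k θ) (ν : Fin θ → ℤ) :
    C.grade ν ≤ Submodule.span k (triSet C ν) := by
  intro u hu
  have h : u ∈ ⨆ ν, Submodule.span k (triSet C ν) := by rw [tri_top]; trivial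
  rw [iSup_split_single _ ν, Submodule.mem_sup] at h
  obtain ⟨w, hw, r, hr, hwr⟩ := h
  have hd := C.internal.submodule_iSupIndep ν
  have hr' : r ∈ ⨆ (j) (_ : j ≠ ν), C.grade j :=
    (iSup₂_mono fun j _ => triSet_le C j) hr
  have hr2 : r ∈ C.grade ν := by
    have : r = u - w := by rw [← hwr]; abel
    rw [this]; exact Submodule.sub_mem _ hu (triSet_le C ν hw)
  have : r = 0 := (Submodule.disjoint_def.1 hd) r hr2 hr'
  rw [← hwr, this, add_zero]; exact hw

/-- The functions of degree `lam` in the coinduced module. -/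
def coS (C : AJSCtx k θ) (N : Type) [AddCommGroup N] [Module k N]
    (gr : (Fin θ → ℤ) → Submodule k N) (act : C.Um →ₗ[k] Module.End k N)
    (lam : Fin θ → ℤ) : Submodule k (C.U →ₗ[k] N) where
  carrier := {φ | (∀ ν, ∀ u ∈ C.grade ν, φ u ∈ gr (ν + lam)) ∧
    (∀ (a : C.Um) (u : C.U), φ (a * u) = act a (φ u)) ∧
    (∀ (s : C.U0) ν, ∀ u ∈ C.grade ν, φ (s * u) = C.π (C.tilde (ν + lam) s) • φ u)}
  add_mem' := by
    rintro f g ⟨h1, h2, h3⟩ ⟨g1, g2, g3⟩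
    refine ⟨fun ν u hu => Submodule.add_mem _ (h1 ν u hu) (g1 ν u hu), fun a u => ?_,
      fun s ν u hu => ?_⟩
    · simp [h2, g2]
    · simp [h3 s ν u hu, g3 s ν u hu]
  zero_mem' := by
    refine ⟨fun ν u hu => Submodule.zero_mem _, fun a u => ?_, fun s ν u hu => ?_⟩ <;> simp
  smul_mem' := by
    rintro c f ⟨h1, h2, h3⟩
    refine ⟨fun ν u hu => Submodule.smul_mem _ _ (h1 ν u hu), fun a u => ?_,
      fun s ν u hu => ?_⟩
    · simp [h2]
    · simp [h3 s ν u hu, smul_comm c]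

section co
variable (C : AJSCtx k θ) (N : Type) [AddCommGroup N] [Module k N]
    (gr : (Fin θ → ℤ) → Submodule k N) (act : C.Um →ₗ[k] Module.End k N)

theorem coS_zero {lam : Fin θ → ℤ} {φ : C.U →ₗ[k] N} (h : φ ∈ coS C N gr act lam)
    (h0 : ∀ ν, ∀ b ∈ C.Up, b ∈ C.grade ν → φ b = 0) : φ = 0 := by
  ext u
  refine U_induct C (p := fun u => φ u = 0) (fun ν u hu => ?_) (by simp)
    (fun a b ha hb => by rw [map_add, ha, hb, add_zero]) u
  have : Submodule.span k (triSet C ν) ≤ LinearMap.ker φ := by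
    rw [Submodule.span_le]
    rintro u ⟨ν₁, ν₂, a, s, b, ha, -, hs, hb, hb2, rfl, rfl⟩
    have e := h.2.1 ⟨a, ha⟩ (s * b)
    have e2 := h.2.2 ⟨s, hs⟩ ν₂ b hb2
    simp only at e e2
    simp [e, e2, h0 ν₂ b hb hb2]
  exact this (tri_span C ν hu)

/-- Restriction to `U⁺`. -/
def resUp : (C.U →ₗ[k] N) →ₗ[k] (C.Up →ₗ[k] N) := LinearMap.lcomp k N C.Up.val.toLinearMap

theorem co_inj (hind : iSupIndep gr) (s : Finset (Fin θ → ℤ))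
    (v : (Fin θ → ℤ) → (C.U →ₗ[k] N)) (hv : ∀ i ∈ s, v i ∈ coS C N gr act i)
    (h0 : resUp C N (∑ i ∈ s, v i) = 0) : ∀ i ∈ s, v i = 0 := by
  intro lam hl
  refine coS_zero C N gr act (hv lam hl) (fun ν b hb hb2 => ?_)
  have h1 := LinearMap.congr_fun h0 ⟨b, hb⟩
  have h2 : ∑ i ∈ s, v i b = 0 := by
    simpa [resUp] using h1
  have hi : iSupIndep (fun i => gr (ν + i)) :=
    hind.comp (add_right_injective ν)
  exact (iSupIndep_iff_finsetSum_eq_zero_imp_eq_zero _).1 hi s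
      (fun i => v i b) (fun i his => (hv i his).1 ν b hb2) h2 lam hl

theorem co_indep (hind : iSupIndep gr) : iSupIndep (coS C N gr act) := by
  rw [iSupIndep_iff_finsetSum_eq_zero_imp_eq_zero]
  intro s v hv hs
  exact co_inj C N gr act hind s v hv (by rw [hs, map_zero])

theorem co_fin [FiniteDimensional k N] (hind : iSupIndep gr) :
    FiniteDimensional k ↥(⨆ i, coS C N gr act i) := by
  have := C.finUp
  refine FiniteDimensional.of_injective
    ((resUp C N).comp (⨆ i, coS C N gr act i).subtype) ?_
  rw [← LinearMap.ker_eq_bot, LinearMap.ker_eq_bot']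
  rintro ⟨x, hx⟩ h0
  obtain ⟨f, hf, hfx⟩ := (Submodule.mem_iSup_iff_exists_finsupp _ _).1 hx
  have h1 : resUp C N x = 0 := h0
  have hfx' : ∑ i ∈ f.support, f i = x := hfx
  rw [← hfx'] at h1
  have h2 := co_inj C N gr act hind f.support f (fun i _ => hf i) h1
  apply Subtype.ext
  change x = 0
  rw [← hfx', Finset.sum_eq_zero h2]

/-- The right translation action of `U` on functions. -/
def coAct : C.U →ₗ[k] Module.End k (C.U →ₗ[k] N) where
  toFun u := LinearMap.lcomp k N (LinearMap.mulRight k u)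
  map_add' a b := by ext; simp [mul_add]
  map_smul' c a := by ext; simp

theorem coAct_apply (u x : C.U) (φ : C.U →ₗ[k] N) : coAct C N u φ x = φ (x * u) := rfl

theorem coAct_hom {ν lam : Fin θ → ℤ} {u : C.U} {φ : C.U →ₗ[k] N} (hu : u ∈ C.grade ν)
    (h : φ ∈ coS C N gr act lam) : coAct C N u φ ∈ coS C N gr act (ν + lam) := by
  refine ⟨fun ν' x hx => ?_, fun a x => ?_, fun s ν' x hx => ?_⟩
  · rw [coAct_apply, ← add_assoc]; exact h.1 _ _ (C.mul_mem hx hu)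
  · rw [coAct_apply, coAct_apply, mul_assoc, h.2.1]
  · rw [coAct_apply, coAct_apply, mul_assoc, h.2.2 s _ _ (C.mul_mem hx hu), add_assoc]

theorem coAct_mem (u : C.U) : ∀ φ ∈ ⨆ i, coS C N gr act i,
    coAct C N u φ ∈ ⨆ i, coS C N gr act i := by
  intro φ hφ
  refine Submodule.iSup_induction _ (motive := fun φ => coAct C N u φ ∈ ⨆ i, coS C N gr act i)
    hφ (fun lam φ hφ => ?_) (by simp)
    (fun x y hx hy => by rw [map_add]; exact Submodule.add_mem _ hx hy)
  refine U_induct C (p := fun u => coAct C N u φ ∈ ⨆ i, coS C N gr act i)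
    (fun ν u hu => ?_) (by simp)
    (fun x y hx hy => by rw [map_add]; exact Submodule.add_mem _ hx hy) u
  exact Submodule.mem_iSup_of_mem _ (coAct_hom C N gr act hu hφ)

/-- The coinduced module. -/
def coind [FiniteDimensional k N] (hind : iSupIndep gr) : CMod C where
  M := ↥(⨆ i, coS C N gr act i)
  ρ := AlgHom.ofLinearMap
    { toFun := fun u => (coAct C N u).restrict (coAct_mem C N gr act u)
      map_add' := fun a b => by ext; simp
      map_smul' := fun c a => by ext; simp }
    (by ext; simp [coAct_apply])
    (fun a b => by ext; simp [coAct_apply, mul_assoc])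
  grM := fun lam => (coS C N gr act lam).comap (Submodule.subtype _)
  internal := by
    refine DirectSum.isInternal_submodule_of_iSupIndep_of_iSup_eq_top ?_ ?_
    · have := co_indep C N gr act hind
      rw [iSupIndep_iff_finsetSum_eq_zero_imp_eq_zero] at this ⊢
      intro s v hv hs i hi
      have h2 := this s (fun i => (v i : C.U →ₗ[k] N)) hv
        (by rw [← Submodule.coe_sum, hs]; rfl) i hi
      exact Subtype.ext h2
    · have hinj := Submodule.map_injective_of_injective
        (Submodule.subtype_injective (⨆ i, coS C N gr act i))
      apply hinj
      rw [Submodule.map_iSup]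
      simp only [Submodule.map_comap_subtype, Submodule.map_top, Submodule.range_subtype]
      exact iSup_congr fun i => inf_eq_right.2 (le_iSup (coS C N gr act) i)
  fin := co_fin C N gr act hind
  act_graded := fun ν μ u m hu hm => coAct_hom C N gr act hu hm
  act_U0 := fun s μ m hm => by
    apply Subtype.ext
    refine LinearMap.ext fun x => ?_
    change coAct C N (s : C.U) m x = C.π (C.tilde μ s) • (m : C.U →ₗ[k] N) x
    rw [coAct_apply]
    refine U_induct C (p := fun x => (m : C.U →ₗ[k] N) (x * s) =
      C.π (C.tilde μ s) • (m : C.U →ₗ[k] N) x) (fun ν x hx => ?_) (by simp)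
      (fun x y hx hy => by simp only [add_mul, map_add, smul_add, hx, hy]) x
    have e := C.tilde_comm ν x hx (C.tilde (-ν) s)
    have e1 : C.tilde ν (C.tilde (-ν) s) = s := by
      have := C.tilde_add (-ν) ν
      rw [neg_add_cancel, C.tilde_zero] at this
      exact (DFunLike.congr_fun this s).symm
    rw [e1] at e
    have hm' : (m : C.U →ₗ[k] N) ∈ coS C N gr act μ := hm
    rw [← e, hm'.2.2 _ ν x hx, C.tilde_add, AlgEquiv.trans_apply, e1]

end co

theorem tri_induct (C : AJSCtx k θ) (ν : Fin θ → ℤ) {p : C.U → Prop}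
    (h : ∀ (ν₁ ν₂ : Fin θ → ℤ) (a : C.Um) (s : C.U0) (b : C.Up), (a : C.U) ∈ C.grade ν₁ →
      (b : C.U) ∈ C.grade ν₂ → ν₁ + ν₂ = ν → p (a * (s * b)))
    (h0 : p 0) (hadd : ∀ a b, p a → p b → p (a + b)) (hsmul : ∀ (c : k) a, p a → p (c • a)) :
    ∀ u ∈ C.grade ν, p u := by
  intro u hu
  refine Submodule.span_induction (p := fun u _ => p u) ?_ h0 (fun x y _ _ => hadd x y)
    (fun c x _ => hsmul c x) (tri_span C ν hu)
  rintro u ⟨ν₁, ν₂, a, s, b, ha, ha2, hs, hb, hb2, e, rfl⟩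
  exact h ν₁ ν₂ ⟨a, ha⟩ ⟨s, hs⟩ ⟨b, hb⟩ ha2 hb2 e

/-- `l` is a linear form on `U` which is the projection to degree zero on `U⁻`. -/
def IsEps (C : AJSCtx k θ) (l : C.U →ₗ[k] k) : Prop :=
  l 1 = 1 ∧ ∀ ν, ν ≠ 0 → ∀ u ∈ C.grade ν, l u = 0

theorem exists_eps (C : AJSCtx k θ) [Nontrivial C.U] : ∃ l, IsEps C l := by
  have h1 : (1 : C.U) ∉ ⨆ (j) (_ : j ≠ 0), C.grade j := by
    intro h
    exact one_ne_zero
      ((Submodule.disjoint_def.1 (C.internal.submodule_iSupIndep 0)) 1 C.one_mem h)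
  obtain ⟨f, hf, hk⟩ := Submodule.exists_le_ker_of_notMem h1
  refine ⟨(f 1)⁻¹ • f, by simp [hf], fun ν hν u hu => ?_⟩
  have : f u = 0 := hk (Submodule.mem_iSup_of_mem ν (Submodule.mem_iSup_of_mem hν hu))
  simp [this]

theorem Um_deg0_smul (C : AJSCtx k θ) {l : C.U →ₗ[k] k} (hl : IsEps C l) (a : C.U)
    (ha : a ∈ C.Um) (ha0 : a ∈ C.grade 0) : a = l a • 1 := by
  have : a ∈ Submodule.span k {(1 : C.U)} := by
    rw [← C.Um_deg0]; exact ⟨ha, ha0⟩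
  obtain ⟨c, rfl⟩ := Submodule.mem_span_singleton.1 this
  rw [map_smul, hl.1]; simp

theorem Um_deg_le (C : AJSCtx k θ) {ν : Fin θ → ℤ} {a : C.U}
    (ha : a ∈ C.Um) (ha0 : a ∈ C.grade ν) : a = 0 ∨ ν ≤ 0 := by
  by_cases h : a = 0
  · exact Or.inl h
  · right
    refine C.Um_neg ν (fun hb => h ?_)
    have : a ∈ Subalgebra.toSubmodule C.Um ⊓ C.grade ν := ⟨ha, ha0⟩
    rw [hb] at this
    simpa using this

theorem Up_deg_le (C : AJSCtx k θ) {ν : Fin θ → ℤ} {a : C.U}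
    (ha : a ∈ C.Up) (ha0 : a ∈ C.grade ν) : a = 0 ∨ 0 ≤ ν := by
  by_cases h : a = 0
  · exact Or.inl h
  · right
    refine C.Up_pos ν (fun hb => h ?_)
    have : a ∈ Subalgebra.toSubmodule C.Up ⊓ C.grade ν := ⟨ha, ha0⟩
    rw [hb] at this
    simpa using this

theorem eps_mul (C : AJSCtx k θ) {l : C.U →ₗ[k] k} (hl : IsEps C l) (a b : C.U)
    (ha : a ∈ C.Um) (hb : b ∈ C.Um) : l (a * b) = l a * l b := by
  revert a
  refine Um_induct C (fun ν a ha ha2 => ?_) (by simp) (fun x y hx hy => ?_)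
  · by_cases hν : ν = 0
    · subst hν
      have h1 := Um_deg0_smul C hl a ha ha2
      calc l (a * b) = l ((l a • 1) * b) := by rw [← h1]
        _ = _ := by simp
    · rw [hl.2 ν hν a ha2, zero_mul]
      revert b
      refine Um_induct C (fun ν' b hb hb2 => ?_) (by simp) (fun x y hx hy => ?_)
      · rcases Um_deg_le C ha ha2 with h | h
        · simp [h]
        rcases Um_deg_le C hb hb2 with h' | h'
        · simp [h']
        refine hl.2 (ν + ν') (fun e => hν ?_) _ (C.mul_mem ha2 hb2)
        refine le_antisymm h ?_
        rw [← e]; exact add_le_of_nonpos_right h'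
      · rw [mul_add, map_add, hx, hy, add_zero]
  · rw [add_mul, map_add, hx, hy, map_add, add_mul]

/-- Grading of `U⁻` shifted by `μ`. -/
def umGr (C : AJSCtx k θ) (μ lam : Fin θ → ℤ) : Submodule k C.Um :=
  (C.grade (lam - μ)).comap C.Um.val.toLinearMap

theorem mem_umGr (C : AJSCtx k θ) (μ lam : Fin θ → ℤ) (a : C.Um) :
    a ∈ umGr C μ lam ↔ (a : C.U) ∈ C.grade (lam - μ) := Iff.rfl

theorem umGr_indep (C : AJSCtx k θ) (μ : Fin θ → ℤ) : iSupIndep (umGr C μ) := by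
  have := C.internal.submodule_iSupIndep.comp (sub_left_injective (b := μ))
  rw [iSupIndep_iff_finsetSum_eq_zero_imp_eq_zero] at this ⊢
  intro s v hv hs i hi
  have h2 := this s (fun i => (v i : C.U)) hv
    (by
      have := congrArg (fun x : C.Um => (x : C.U)) hs
      simpa using this) i hi
  exact Subtype.ext h2

theorem umGr_top (C : AJSCtx k θ) (μ : Fin θ → ℤ) : (⨆ lam, umGr C μ lam) = ⊤ := by
  rw [eq_top_iff]
  rintro ⟨a, ha⟩ -
  have key : ∀ a ∈ C.Um, ∃ h : a ∈ C.Um, (⟨a, h⟩ : C.Um) ∈ ⨆ lam, umGr C μ lam := by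
    refine Um_induct C (fun ν a ha ha2 => ⟨ha, ?_⟩) ⟨C.Um.zero_mem, ?_⟩ ?_
    · refine Submodule.mem_iSup_of_mem (ν + μ) ?_
      rw [mem_umGr, add_sub_cancel_right]; exact ha2
    · exact Submodule.zero_mem _
    · rintro a b ⟨h, h1⟩ ⟨h', h2⟩
      exact ⟨C.Um.add_mem h h', Submodule.add_mem _ h1 h2⟩
  exact (key a ha).2

/-- Grading of `k` concentrated in degree `μ`. -/
def kGr (k : Type) [Field k] {θ : ℕ} (μ lam : Fin θ → ℤ) : Submodule k k where
  carrier := {x | lam ≠ μ → x = 0}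
  add_mem' := fun ha hb h => by rw [ha h, hb h, add_zero]
  zero_mem' := fun _ => rfl
  smul_mem' := fun c x hx h => by rw [hx h, smul_zero]

theorem mem_kGr (μ lam : Fin θ → ℤ) (x : k) : x ∈ kGr k μ lam ↔ (lam ≠ μ → x = 0) := Iff.rfl

theorem kGr_indep (μ : Fin θ → ℤ) : iSupIndep (kGr k μ) := by
  rw [iSupIndep_iff_finsetSum_eq_zero_imp_eq_zero]
  intro s v hv hs i hi
  by_cases h : i = μ
  · subst h
    rw [← hs]
    exact (Finset.sum_eq_single_of_mem i hi (fun j hj hij => hv j hj hij)).symm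
  · exact hv i hi h

/-- The action of `U⁻` on itself. -/
def actUm (C : AJSCtx k θ) : C.Um →ₗ[k] Module.End k C.Um := LinearMap.mul k C.Um

/-- The action of `U⁻` on the trivial module. -/
def actk (C : AJSCtx k θ) (l : C.U →ₗ[k] k) : C.Um →ₗ[k] Module.End k k :=
  (LinearMap.mul k k).comp (l.comp C.Um.val.toLinearMap)

theorem actk_apply (C : AJSCtx k θ) (l : C.U →ₗ[k] k) (a : C.Um) (x : k) :
    actk C l a x = l a * x := rfl

theorem actUm_apply (C : AJSCtx k θ) (a x : C.Um) : actUm C a x = a * x := rfl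

/-- The lift to `U⁻` of a function `φ : U → k`. -/
noncomputable def liftFun (C : AJSCtx k θ) (φ : C.U →ₗ[k] k) : C.U →ₗ[k] C.Um :=
  (TensorProduct.lift (LinearMap.mk₂ k
    (fun (a : C.Um) (x : C.U0 ⊗[k] C.Up) => φ (TensorProduct.lift
      ((LinearMap.mul k C.U).compl₁₂ C.U0.val.toLinearMap C.Up.val.toLinearMap) x) • a)
    (fun a b x => by simp) (fun c a x => by rw [smul_comm])
    (fun a x y => by simp [add_smul]) (fun c a x => by simp [mul_smul]))).comp
  (LinearEquiv.ofBijective _ C.triangular).symm.toLinearMap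

theorem liftFun_apply (C : AJSCtx k θ) (φ : C.U →ₗ[k] k) (a : C.Um) (s : C.U0) (b : C.Up) :
    liftFun C φ (a * (s * b)) = φ (s * b) • a := by
  have : (LinearEquiv.ofBijective _ C.triangular).symm ((a : C.U) * (s * b)) =
      a ⊗ₜ[k] (s ⊗ₜ[k] b) := by
    rw [LinearEquiv.symm_apply_eq]; rfl
  rw [liftFun, LinearMap.comp_apply, LinearEquiv.coe_coe, this]
  rfl

theorem liftFun_um (C : AJSCtx k θ) (φ : C.U →ₗ[k] k) (a : C.Um) (u : C.U) :
    liftFun C φ (a * u) = a * liftFun C φ u := by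
  refine U_induct C (p := fun u => liftFun C φ (a * u) = a * liftFun C φ u)
    (fun ν u hu => ?_) (by simp) (fun x y hx hy => by rw [mul_add, map_add, map_add, hx, hy, mul_add]) u
  refine tri_induct C ν (p := fun u => liftFun C φ (a * u) = a * liftFun C φ u) ?_ (by simp)
    (fun x y hx hy => by rw [mul_add, map_add, map_add, hx, hy, mul_add])
    (fun c x hx => by simp [hx]) u hu
  intro ν₁ ν₂ a' s b _ _ _
  have := liftFun_apply C φ (a * a') s b
  rw [liftFun_apply, ← mul_assoc]
  simpa using this

theorem liftFun_mem (C : AJSCtx k θ) {l : C.U →ₗ[k] k}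
    (μ lam : Fin θ → ℤ) (φ : C.U →ₗ[k] k) (hφ : φ ∈ coS C k (kGr k μ) (actk C l) lam) :
    liftFun C φ ∈ coS C C.Um (umGr C μ) (actUm C) lam := by
  refine ⟨fun ν => ?_, liftFun_um C φ, fun s ν => ?_⟩
  · refine tri_induct C ν ?_ (by simp) (fun x y hx hy => by
      rw [map_add]; exact Submodule.add_mem _ hx hy)
      (fun c x hx => by rw [map_smul]; exact Submodule.smul_mem _ _ hx)
    rintro ν₁ ν₂ a s b ha hb rfl
    rw [liftFun_apply, mem_umGr]
    by_cases h : ν₂ + lam = μ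
    · rw [← h]
      have : ν₁ + ν₂ + lam - (ν₂ + lam) = ν₁ := by abel
      rw [this]
      exact Submodule.smul_mem _ _ ha
    · have h1 := C.mul_mem (C.U0_deg0 s.2) hb
      rw [zero_add] at h1
      have h2 := hφ.1 ν₂ _ h1 h
      rw [h2]; simp
  · refine tri_induct C ν ?_ (by simp) (fun x y hx hy => by
      rw [mul_add, map_add, map_add, hx, hy, smul_add])
      (fun c x hx => by rw [mul_smul_comm, map_smul, map_smul, hx, smul_comm])
    rintro ν₁ ν₂ a s' b ha hb rfl
    have e : (s : C.U) * (a * (s' * b)) = a * (((C.tilde ν₁ s * s' : C.U0) : C.U) * b) := by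
      rw [← mul_assoc, C.tilde_comm ν₁ a ha s]
      simp [mul_assoc]
    rw [e, liftFun_apply, liftFun_apply]
    have h1 := C.mul_mem (C.U0_deg0 s'.2) hb
    rw [zero_add] at h1
    have h2 := hφ.2.2 (C.tilde ν₁ s) ν₂ _ h1
    rw [Subalgebra.coe_mul, mul_assoc, h2, add_assoc, C.tilde_add ν₁, AlgEquiv.trans_apply,
      smul_assoc]

theorem eps_liftFun (C : AJSCtx k θ) {l : C.U →ₗ[k] k}
    (μ lam : Fin θ → ℤ) (φ : C.U →ₗ[k] k) (hφ : φ ∈ coS C k (kGr k μ) (actk C l) lam) (u : C.U) :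
    l (liftFun C φ u) = φ u := by
  refine U_induct C (p := fun u => l (liftFun C φ u) = φ u)
    (fun ν u hu => ?_) (by simp) (fun x y hx hy => by simp [map_add, hx, hy]) u
  refine tri_induct C ν (p := fun u => l (liftFun C φ u) = φ u) ?_ (by simp)
    (fun x y hx hy => by simp [map_add, hx, hy])
    (fun c x hx => by simp [hx]) u hu
  intro ν₁ ν₂ a s b _ _ _
  rw [liftFun_apply, hφ.2.1, actk_apply]
  simp [mul_comm]

/-- Composition with `l` maps one coinduced module to the other. -/
theorem comp_mem (C : AJSCtx k θ) {l : C.U →ₗ[k] k} (hl : IsEps C l)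
    (μ lam : Fin θ → ℤ) (φ : C.U →ₗ[k] C.Um) (hφ : φ ∈ coS C C.Um (umGr C μ) (actUm C) lam) :
    (l.comp C.Um.val.toLinearMap).comp φ ∈ coS C k (kGr k μ) (actk C l) lam := by
  refine ⟨fun ν u hu => ?_, fun a u => ?_, fun s ν u hu => ?_⟩
  · rw [mem_kGr]
    intro h
    exact hl.2 _ (sub_ne_zero.2 h) _ (hφ.1 ν u hu)
  · have := hφ.2.1 a u
    rw [LinearMap.comp_apply, this, actUm_apply, actk_apply]
    exact eps_mul C hl a _ a.2 (φ u).2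
  · rw [LinearMap.comp_apply, hφ.2.2 s ν u hu, map_smul]; rfl

/-- The lifting property relative to a submodule. -/
def LiftP (l : C.U →ₗ[k] k) (P : CMod C) (F : Submodule k P.M) : Prop :=
  ∀ (μ : Fin θ → ℤ) (f : P.M →ₗ[k] k), (∀ x ∈ F, f x = 0) →
    (∀ lam, lam ≠ μ → ∀ p ∈ P.grM lam, f p = 0) →
    (∀ (a : C.Um) (p : P.M), f (P.ρ a p) = l a * f p) →
    ∃ h : P.M →ₗ[k] C.Um, (∀ x ∈ F, h x = 0) ∧
      (∀ (a : C.Um) (p : P.M), h (P.ρ a p) = a * h p) ∧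
      (∀ lam, ∀ p ∈ P.grM lam, (h p : C.U) ∈ C.grade (lam - μ)) ∧
      ∀ p, l (h p) = f p

theorem coind_um {N : Type} [AddCommGroup N] [Module k N]
    {gr : (Fin θ → ℤ) → Submodule k N} {act : C.Um →ₗ[k] Module.End k N}
    {φ : C.U →ₗ[k] N} (hφ : φ ∈ ⨆ i, coS C N gr act i) (a : C.Um) (u : C.U) :
    φ (a * u) = act a (φ u) :=
  Submodule.iSup_induction _ (motive := fun φ => φ (a * u) = act a (φ u)) hφ
    (fun lam φ h => h.2.1 a u) (by simp) (fun x y hx hy => by simp [hx, hy])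

theorem liftP_bot {l : C.U →ₗ[k] k} (hl : IsEps C l) (P : CMod C) (hP : CProjective P) :
    LiftP l P ⊥ := by
  intro μ f _ hf1 hf2
  have := C.finUm
  let A := coind C C.Um (umGr C μ) (actUm C) (umGr_indep C μ)
  let B := coind C k (kGr k μ) (actk C l) (kGr_indep μ)
  let G : (C.U →ₗ[k] C.Um) →ₗ[k] (C.U →ₗ[k] k) :=
    LinearMap.llcomp k C.U C.Um k (l.comp C.Um.val.toLinearMap)
  have hG : ∀ φ ∈ ⨆ i, coS C C.Um (umGr C μ) (actUm C) i,
      G φ ∈ ⨆ i, coS C k (kGr k μ) (actk C l) i := by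
    intro φ hφ
    refine Submodule.iSup_induction _
      (motive := fun φ => G φ ∈ ⨆ i, coS C k (kGr k μ) (actk C l) i) hφ
      (fun lam φ h => Submodule.mem_iSup_of_mem lam (comp_mem C hl μ lam φ h)) (by simp)
      (fun x y hx hy => by rw [map_add]; exact Submodule.add_mem _ hx hy)
  let g : A.M →ₗ[k] B.M := G.restrict hG
  have hg : IsCHom A B g := by
    refine ⟨fun u m => rfl, fun ν m hm => comp_mem C hl μ ν m.1 hm⟩
  have hgs : Function.Surjective g := by
    rintro ⟨φ, hφ⟩
    have : ∃ ψ, ∃ h : ψ ∈ ⨆ i, coS C C.Um (umGr C μ) (actUm C) i, G ψ = φ := by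
      refine Submodule.iSup_induction _
        (motive := fun φ => ∃ ψ, ∃ h : ψ ∈ ⨆ i, coS C C.Um (umGr C μ) (actUm C) i, G ψ = φ) hφ
        (fun lam φ h => ⟨liftFun C φ, Submodule.mem_iSup_of_mem lam (liftFun_mem C μ lam φ h),
          LinearMap.ext (eps_liftFun C μ lam φ h)⟩) ⟨0, Submodule.zero_mem _, map_zero _⟩ ?_
      rintro x y ⟨a, ha, rfl⟩ ⟨b, hb, rfl⟩
      exact ⟨a + b, Submodule.add_mem _ ha hb, map_add _ _ _⟩
    obtain ⟨ψ, h, e⟩ := this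
    exact ⟨⟨ψ, h⟩, Subtype.ext e⟩
  let F0 : P.M →ₗ[k] (C.U →ₗ[k] k) :=
    { toFun := fun p => f.comp (actVec P p)
      map_add' := fun x y => by ext u; simp [actVec]
      map_smul' := fun c x => by ext u; simp [actVec] }
  have hF0 : ∀ lam, ∀ p ∈ P.grM lam, F0 p ∈ coS C k (kGr k μ) (actk C l) lam := by
    intro lam p hp
    refine ⟨fun ν u hu => ?_, fun a u => ?_, fun s ν u hu => ?_⟩
    · rw [mem_kGr]; intro hne
      exact hf1 _ hne _ (P.act_graded ν lam u p hu hp)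
    · change f (P.ρ (a * u) p) = l a * f (P.ρ u p)
      rw [map_mul, ← hf2]; rfl
    · change f (P.ρ (s * u) p) = _ • f (P.ρ u p)
      rw [map_mul, Module.End.mul_apply, P.act_U0 s _ _ (P.act_graded ν lam u p hu hp), map_smul]
  have hF1 : ∀ p, F0 p ∈ ⨆ i, coS C k (kGr k μ) (actk C l) i :=
    M_induct P (fun ν p hp => Submodule.mem_iSup_of_mem ν (hF0 ν p hp)) (by simp)
      (fun x y hx hy => by rw [map_add]; exact Submodule.add_mem _ hx hy)
  let fh : P.M →ₗ[k] B.M := F0.codRestrict _ hF1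
  have hfh : IsCHom P B fh := by
    refine ⟨fun u m => ?_, fun ν m hm => hF0 ν m hm⟩
    apply Subtype.ext
    refine LinearMap.ext fun x => ?_
    change f (P.ρ x (P.ρ u m)) = f (P.ρ (x * u) m)
    rw [map_mul]; rfl
  obtain ⟨H, hH, hHg⟩ := hP A B g hg hgs fh hfh
  let ev : A.M →ₗ[k] C.Um :=
    (LinearMap.applyₗ (1 : C.U)).comp (⨆ i, coS C C.Um (umGr C μ) (actUm C) i).subtype
  have hev : ∀ x : A.M, ev x = x.1 1 := fun x => rfl
  refine ⟨ev.comp H, by simp, fun a p => ?_, fun lam p hp => ?_, fun p => ?_⟩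
  · rw [LinearMap.comp_apply, LinearMap.comp_apply, hH.1, hev, hev]
    change (H p).1 (1 * a) = _
    rw [one_mul]
    have := coind_um (H p).2 a 1
    rwa [mul_one] at this
  · have h1 : (H p).1 ∈ coS C C.Um (umGr C μ) (actUm C) lam := hH.2 lam p hp
    have h2 := h1.1 0 1 C.one_mem
    rw [zero_add] at h2
    exact h2
  · have h1 := LinearMap.congr_fun hHg p
    have h2 := congrArg (fun x : B.M => x.1 1) h1
    have h3 : (fh p).1 1 = f p := by
      change f (P.ρ 1 p) = f p
      rw [map_one]; rfl
    rw [← h3]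
    exact h2

/-- The Verma module structure on `U⁻` obtained from a subquotient. -/
noncomputable def vermaOf (P : CMod C) (F F' : Submodule k P.M) (hF : P.stable F) (hF' : P.stable F')
    (μ : Fin θ → ℤ) (v : P.M) (hvμ : v ∈ P.grM μ) (hvF : v ∈ F')
    (h : P.M →ₗ[k] C.Um) (h0 : ∀ x ∈ F, h x = 0)
    (h1 : ∀ (a : C.Um) (p : P.M), h (P.ρ a p) = a * h p)
    (h2 : ∀ lam, ∀ p ∈ P.grM lam, (h p : C.U) ∈ C.grade (lam - μ))
    (h3 : h v = 1) (hdec : ∀ x ∈ F', x - P.ρ (h x : C.U) v ∈ F) : CMod C where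
  M := C.Um
  ρ := AlgHom.ofLinearMap
    { toFun := fun u => h.comp ((P.ρ u).comp ((actVec P v).comp C.Um.val.toLinearMap))
      map_add' := fun a b => by ext; simp
      map_smul' := fun c a => by ext; simp }
    (by
      refine LinearMap.ext fun a => ?_
      change h (P.ρ 1 (P.ρ (a : C.U) v)) = a
      rw [map_one, Module.End.one_apply, h1, h3, mul_one])
    (fun u u' => by
      refine LinearMap.ext fun a => ?_
      change h (P.ρ (u * u') (P.ρ (a : C.U) v)) =
        h (P.ρ u (P.ρ (h (P.ρ u' (P.ρ (a : C.U) v)) : C.U) v))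
      have e := hF u _ (hdec (P.ρ u' (P.ρ (a : C.U) v)) (hF' _ _ (hF' _ _ hvF)))
      have e' := h0 _ e
      rw [map_sub, map_sub, sub_eq_zero] at e'
      rw [map_mul, Module.End.mul_apply, e'])
  grM := umGr C μ
  internal := DirectSum.isInternal_submodule_of_iSupIndep_of_iSup_eq_top
    (umGr_indep C μ) (umGr_top C μ)
  fin := C.finUm
  act_graded := fun ν lam u a hu ha => by
    have e1 := P.act_graded _ _ _ _ ha hvμ
    rw [sub_add_cancel] at e1
    exact h2 _ _ (P.act_graded ν lam u _ hu e1)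
  act_U0 := fun s lam a ha => by
    have e1 := P.act_graded _ _ _ _ ha hvμ
    rw [sub_add_cancel] at e1
    change h (P.ρ (s : C.U) (P.ρ (a : C.U) v)) = _
    have e2 := P.act_U0 s lam _ e1
    have e3 : h (P.ρ (a : C.U) v) = a := by rw [h1, h3, mul_one]
    refine (congrArg h e2).trans ?_
    rw [map_smul]
    exact congrArg _ e3

theorem step {l : C.U →ₗ[k] k} (hl : IsEps C l) (P : CMod C) (F : Submodule k P.M)
    (hg : P.gradedSub F) (hF : P.stable F) (hL : LiftP l P F) (hne : F ≠ ⊤) :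
    ∃ (F' : Submodule k P.M) (μ : Fin θ → ℤ), F < F' ∧ P.gradedSub F' ∧ P.stable F' ∧
      LiftP l P F' ∧ ∃ (Z : CMod C) (m : Z.M), IsVerma μ Z m ∧ SubquotIso P F' F Z := by
  -- a maximal weight outside `F`
  have hfin : {lam | ¬ P.grM lam ≤ F}.Finite := by
    refine (WellFoundedGT.finite_ne_bot_of_iSupIndep P.internal.submodule_iSupIndep).subset ?_
    intro lam hlam hb
    exact hlam (by rw [hb]; exact bot_le)
  have hnon : {lam | ¬ P.grM lam ≤ F}.Nonempty := by
    by_contra hcon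
    rw [Set.not_nonempty_iff_eq_empty] at hcon
    apply hne
    rw [eq_top_iff, ← P.internal.submodule_iSup_eq_top]
    refine iSup_le fun lam => ?_
    by_contra hh
    have : lam ∈ {lam | ¬ P.grM lam ≤ F} := hh
    rw [hcon] at this
    exact this
  obtain ⟨μ, hμ⟩ := hfin.exists_maximal hnon
  have hmax : ∀ ν : Fin θ → ℤ, ν ≠ 0 → 0 ≤ ν → P.grM (ν + μ) ≤ F := by
    intro ν hν h0
    by_contra hh
    have h1 := hμ.2 hh (le_add_of_nonneg_left h0)
    exact hν (le_antisymm (by simpa using h1) h0)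
  obtain ⟨v, hvμ, hvF⟩ := Set.not_subset.1 hμ.1
  replace hvμ : v ∈ P.grM μ := hvμ
  replace hvF : v ∉ F := hvF
  -- the functional
  have hvn : v ∉ F ⊔ ⨆ (j) (_ : j ≠ μ), P.grM j := by
    intro hv
    have hle : F ⊔ (⨆ (j) (_ : j ≠ μ), P.grM j) ≤ (F ⊓ P.grM μ) ⊔ ⨆ (j) (_ : j ≠ μ), P.grM j := by
      refine sup_le ?_ le_sup_right
      conv_lhs => rw [hg]
      refine iSup_le fun lam => ?_
      by_cases hh : lam = μ
      · subst hh; exact le_sup_left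
      · exact le_trans inf_le_right (le_trans (le_iSup₂ (f := fun j (_ : j ≠ μ) => P.grM j) lam hh)
          le_sup_right)
    obtain ⟨x, hx, y, hy, hxy⟩ := Submodule.mem_sup.1 (hle hv)
    have hy2 : y ∈ P.grM μ := by
      have : y = v - x := by rw [← hxy]; abel
      rw [this]; exact Submodule.sub_mem _ hvμ hx.2
    have := (Submodule.disjoint_def.1 (P.internal.submodule_iSupIndep μ)) y hy2 hy
    rw [this, add_zero] at hxy
    exact hvF (hxy ▸ hx.1)
  obtain ⟨f', hf', hk⟩ := Submodule.exists_le_ker_of_notMem hvn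
  obtain ⟨f, hfv, hfF, hfg⟩ : ∃ f : P.M →ₗ[k] k, f v = 1 ∧ (∀ x ∈ F, f x = 0) ∧
      (∀ lam, lam ≠ μ → ∀ p ∈ P.grM lam, f p = 0) := by
    refine ⟨(f' v)⁻¹ • f', by simp [hf'], fun x hx => ?_, fun lam hlam p hp => ?_⟩
    · have : f' x = 0 := hk (Submodule.mem_sup_left hx)
      simp [this]
    · have : f' p = 0 := hk (Submodule.mem_sup_right
        (Submodule.mem_iSup_of_mem lam (Submodule.mem_iSup_of_mem hlam hp)))
      simp [this]
  have hfU : ∀ (a : C.Um) (p : P.M), f (P.ρ a p) = l a * f p := by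
    rintro ⟨a, ha⟩ p
    change f (P.ρ a p) = l a * f p
    revert a
    refine Um_induct C (fun ν a ha ha2 => ?_) (by simp)
      (fun x y hx hy => by simp [map_add, hx, hy, add_mul])
    by_cases hν : ν = 0
    · subst hν
      have e := Um_deg0_smul C hl a ha ha2
      calc f (P.ρ a p) = f (P.ρ (l a • 1) p) := by rw [← e]
        _ = _ := by simp
    · rw [hl.2 ν hν a ha2, zero_mul]
      refine M_induct P (p := fun p => f (P.ρ a p) = 0) (fun lam p hp => ?_) (by simp)
        (fun x y hx hy => by simp [map_add, hx, hy]) p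
      rcases Um_deg_le C ha ha2 with hh | hh
      · simp [hh]
      by_cases hlam : ν + lam = μ
      · refine hfF _ (hF a _ (hmax (-ν) (neg_ne_zero.2 hν) (neg_nonneg.2 hh) ?_))
        rw [← hlam, neg_add_cancel_left]; exact hp
      · exact hfg _ hlam _ (P.act_graded ν lam a p ha2 hp)
  obtain ⟨h, h0, h1, h2, hlh⟩ := hL μ f hfF hfg hfU
  have h3 : h v = 1 := by
    have e := h2 μ v hvμ
    rw [sub_self] at e
    have e2 := Um_deg0_smul C hl _ (h v).2 e
    rw [hlh, hfv, one_smul] at e2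
    exact Subtype.ext e2
  have h4 : ∀ a : C.Um, h (P.ρ (a : C.U) v) = a := fun a => by rw [h1, h3, mul_one]
  let R := LinearMap.range ((actVec P v).comp C.Um.val.toLinearMap)
  have hR : ∀ a ∈ C.Um, P.ρ a v ∈ R := fun a ha => ⟨⟨a, ha⟩, rfl⟩
  have hvR : v ∈ R := by
    have := hR 1 C.Um.one_mem
    rwa [map_one] at this
  have hF'ind : ∀ x ∈ F ⊔ R, ∃ y ∈ F, ∃ a : C.Um, y + P.ρ (a : C.U) v = x := by
    intro x hx
    obtain ⟨y, hy, z, ⟨a, rfl⟩, e⟩ := Submodule.mem_sup.1 hx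
    exact ⟨y, hy, a, e⟩
  have hdec : ∀ x ∈ F ⊔ R, x - P.ρ (h x : C.U) v ∈ F := by
    intro x hx
    obtain ⟨y, hy, a, rfl⟩ := hF'ind x hx
    rw [map_add, h0 y hy, zero_add, h4, add_sub_cancel_right]
    exact hy
  have hUpv : ∀ ν, ν ≠ 0 → ∀ b ∈ C.Up, b ∈ C.grade ν → P.ρ b v ∈ F := by
    intro ν hν b hb hb2
    rcases Up_deg_le C hb hb2 with hh | hh
    · simp [hh]
    · exact hmax ν hν hh (P.act_graded _ _ _ _ hb2 hvμ)
  have hUv : ∀ u, P.ρ u v ∈ F ⊔ R := by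
    refine U_induct C (fun ν => ?_) (by simp)
      (fun x y hx hy => by rw [map_add]; exact Submodule.add_mem _ hx hy)
    refine tri_induct C ν ?_ (by simp)
      (fun x y hx hy => by rw [map_add]; exact Submodule.add_mem _ hx hy)
      (fun c x hx => by rw [map_smul]; exact Submodule.smul_mem _ _ hx)
    intro ν₁ ν₂ a s b ha hb _
    rw [map_mul, map_mul, Module.End.mul_apply, Module.End.mul_apply]
    by_cases hν : ν₂ = 0
    · subst hν
      have : (b : C.U) ∈ Submodule.span k {(1 : C.U)} := by
        rw [← C.Up_deg0]; exact ⟨b.2, hb⟩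
      obtain ⟨c, hc⟩ := Submodule.mem_span_singleton.1 this
      rw [← hc, map_smul, map_one, LinearMap.smul_apply, Module.End.one_apply, map_smul, map_smul,
        P.act_U0 s μ v hvμ, map_smul]
      exact Submodule.mem_sup_right (Submodule.smul_mem _ _ (Submodule.smul_mem _ _ (hR a a.2)))
    · exact Submodule.mem_sup_left (hF _ _ (hF _ _ (hUpv ν₂ hν b b.2 hb)))
  have hF' : P.stable (F ⊔ R) := by
    intro u x hx
    obtain ⟨y, hy, a, rfl⟩ := hF'ind x hx
    rw [map_add]
    refine Submodule.add_mem _ (Submodule.mem_sup_left (hF u y hy)) ?_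
    rw [← Module.End.mul_apply, ← map_mul]
    exact hUv _
  have hg' : P.gradedSub (F ⊔ R) := by
    refine le_antisymm ?_ (iSup_le fun _ => inf_le_left)
    refine sup_le ?_ ?_
    · conv_lhs => rw [hg]
      exact iSup_mono fun lam => inf_le_inf_right _ le_sup_left
    · rintro x ⟨⟨a, ha⟩, rfl⟩
      change P.ρ a v ∈ _
      revert a
      refine Um_induct C (fun ν a ha ha2 => ?_) (by simp)
        (fun x y hx hy => by rw [map_add]; exact Submodule.add_mem _ hx hy)
      exact Submodule.mem_iSup_of_mem (ν + μ) ⟨hUv a, P.act_graded _ _ _ _ ha2 hvμ⟩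
  refine ⟨F ⊔ R, μ, ?_, hg', hF', ?_, ?_⟩
  · refine lt_of_le_of_ne le_sup_left (fun e => hvF ?_)
    rw [e]; exact Submodule.mem_sup_right hvR
  · intro μ' f₂ hf0 hf1 hf2
    obtain ⟨h', a0, a1, a2, a3⟩ := hL μ' f₂ (fun x hx => hf0 x (Submodule.mem_sup_left hx)) hf1 hf2
    refine ⟨h' - (LinearMap.mulRight k (h' v)).comp h, fun x hx => ?_, fun a p => ?_,
      fun lam p hp => ?_, fun p => ?_⟩
    · obtain ⟨y, hy, a, rfl⟩ := hF'ind x hx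
      simp [a0 y hy, h0 y hy, a1, h4]
    · simp [a1, h1, mul_sub, mul_assoc]
    · have e1 := C.mul_mem (h2 lam p hp) (a2 μ v hvμ)
      rw [sub_add_sub_cancel] at e1
      have := Submodule.sub_mem _ (a2 lam p hp) e1
      simpa using this
    · have e1 := eps_mul C hl (h p) (h' v) (h p).2 (h' v).2
      rw [a3 v, hf0 v (Submodule.mem_sup_right hvR), mul_zero] at e1
      simp [e1, a3]
  · refine ⟨vermaOf P F (F ⊔ R) hF hF' μ v hvμ (Submodule.mem_sup_right hvR) h h0 h1 h2 h3 hdec,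
      (1 : C.Um), ⟨⟨?_, ?_⟩, ?_⟩, ?_⟩
    · change (1 : C.U) ∈ C.grade (μ - μ)
      rw [sub_self]; exact C.one_mem
    · intro ν hν u hu
      change h (P.ρ u (P.ρ 1 v)) = 0
      rw [map_one]
      exact h0 _ (hUpv ν hν u hu.1 hu.2)
    · have : ∀ a : C.Um, h (P.ρ (a : C.U) (P.ρ 1 v)) = a := by
        intro a
        rw [map_one]; exact h4 a
      constructor
      · intro a b hab
        exact ((this a).symm.trans hab).trans (this b)
      · intro a
        exact ⟨a, this a⟩
    · refine ⟨h.comp (F ⊔ R).subtype, fun a => ?_, fun x => ?_, fun u x hx => ?_,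
        fun ν x hx => h2 ν x hx⟩
      · exact ⟨⟨P.ρ ((show C.Um from a : C.Um) : C.U) v, hUv _⟩, h4 a⟩
      · constructor
        · intro hx
          have e := hdec x x.2
          have hx' : h (x : P.M) = 0 := hx
          rw [hx'] at e
          simpa using e
        · intro hx
          exact h0 _ hx
      · change h (P.ρ u x) = h (P.ρ u (P.ρ (h x : C.U) v))
        have e := h0 _ (hF u _ (hdec x x.2))
        rw [map_sub, map_sub, sub_eq_zero] at e
        exact e

theorem chain {l : C.U →ₗ[k] k} (hl : IsEps C l) (P : CMod C) (F : Submodule k P.M) :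
    P.gradedSub F → P.stable F → LiftP l P F →
    ∃ (r : ℕ) (G : Fin (r + 1) → Submodule k P.M) (μs : Fin r → (Fin θ → ℤ)),
      Monotone G ∧ G 0 = F ∧ G (Fin.last r) = ⊤ ∧
      (∀ i, P.gradedSub (G i) ∧ P.stable (G i)) ∧
      ∀ i : Fin r, ∃ (Z : CMod C) (m : Z.M),
        IsVerma (μs i) Z m ∧ SubquotIso P (G i.succ) (G i.castSucc) Z := by
  induction F using WellFoundedGT.induction with
  | ind F ih =>
    intro hg hF hL
    by_cases hne : F = ⊤
    · refine ⟨0, fun _ => F, Fin.elim0, fun _ _ _ => le_rfl, rfl, hne, fun _ => ⟨hg, hF⟩,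
        fun i => i.elim0⟩
    · obtain ⟨F', μ, hlt, hg', hF', hL', hZ⟩ := step hl P F hg hF hL hne
      obtain ⟨r, G, μs, hm, hG0, hGl, hGs, hGZ⟩ := ih F' hlt hg' hF' hL'
      refine ⟨r + 1, Fin.cons F G, Fin.cons μ μs, ?_, rfl, ?_, ?_, ?_⟩
      · rw [Fin.monotone_iff_le_succ]
        intro i
        refine Fin.cases ?_ (fun j => ?_) i
        · simpa [hG0] using hlt.le
        · rw [← Fin.succ_castSucc, Fin.cons_succ, Fin.cons_succ]
          exact hm (Fin.castSucc_le_succ j)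
      · rw [← Fin.succ_last, Fin.cons_succ, hGl]
      · intro i
        refine Fin.cases ?_ (fun j => ?_) i
        · exact ⟨hg, hF⟩
        · exact hGs j
      · intro i
        refine Fin.cases ?_ (fun j => ?_) i
        · simpa [hG0] using hZ
        · simpa only [← Fin.succ_castSucc, Fin.cons_succ] using hGZ j

end helpers

/-- **Projectives have Verma filtrations**: every projective object `P` of `C_k` admits a
chain of graded `U`-submodules `0 = F 0 ⊂ ⋯ ⊂ F r = P` whose successive quotients are
isomorphic in `C_k` to Verma modules `Z(μs i)`. -/
theorem projective_has_Z_filtration {k : Type} [Field k] [IsAlgClosed k] [CharZero k]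
    {θ : ℕ} (hθ : 1 ≤ θ) (C : AJSCtx k θ)
    (P : CMod C) (hP : CProjective P) :
    ∃ (r : ℕ) (F : Fin (r + 1) → Submodule k P.M) (μs : Fin r → (Fin θ → ℤ)),
      Monotone F ∧ F 0 = ⊥ ∧ F (Fin.last r) = ⊤ ∧
      (∀ i, P.gradedSub (F i) ∧ P.stable (F i)) ∧
      ∀ i : Fin r, ∃ (Z : CMod C) (m : Z.M),
        IsVerma (μs i) Z m ∧ SubquotIso P (F i.succ) (F i.castSucc) Z := by
  have hb : P.gradedSub ⊥ := by
    unfold CMod.gradedSub; simp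
  have hs : P.stable ⊥ := by
    intro u m hm
    rw [(Submodule.mem_bot k).1 hm, map_zero]; exact Submodule.zero_mem _
  rcases subsingleton_or_nontrivial C.U with h | h
  · have hM : ∀ x : P.M, x = 0 := fun x => by
      have e : P.ρ 1 x = P.ρ 0 x := by rw [Subsingleton.elim (1 : C.U) 0]
      simpa using e
    refine ⟨0, fun _ => ⊥, Fin.elim0, fun _ _ _ => le_rfl, rfl, ?_, fun _ => ⟨hb, hs⟩,
      fun i => i.elim0⟩
    rw [eq_comm, eq_bot_iff]
    intro x _
    exact (Submodule.mem_bot k).2 (hM x)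
  · obtain ⟨l, hl⟩ := exists_eps C
    exact chain hl P ⊥ hb hs (liftP_bot hl P hP)
end
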